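/- arXiv:1407.6215 — 5 statements merged into one kernel-verified Lean document; each statement's English description precedes it below -/
import Mathlib

section
/- Let G be a finite group with G ∈ CD(G) and Z(G) ∈ CD(G) such that the interval ⟦Z(G), G⟧ in CD(G) is a quasi-antichain having at least three pairwise distinct atoms. Then there exists a prime p such that G/Z(G) and the commutator subgroup [G,G] are elementary abelian p-groups. -/
/-- The Chermak-Delgado measure of a subgroup `H` of a finite group `G`:
`m_G(H) = |H| · |C_G(H)|`. -/
noncomputable def CDmeasure {G : Type*} [Group G] (H : Subgroup G) : ℕ :=
  Nat.card H * Nat.card (Subgroup.centralizer (H : Set G))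

/-- `H` belongs to the Chermak-Delgado lattice of `G`: its measure is maximal. -/
def inCD {G : Type*} [Group G] (H : Subgroup G) : Prop :=
  ∀ K : Subgroup G, CDmeasure K ≤ CDmeasure H

open scoped commutatorElement

open Pointwise in
theorem CDaux_card_mul_le {G : Type*} [Group G] [Finite G] (H K : Subgroup G) :
    Nat.card H * Nat.card K ≤
      Nat.card ((H : Set G) * (K : Set G) : Set G) * Nat.card (H ⊓ K : Subgroup G) := by
  classical
  have hs : ∀ g : ((H : Set G) * (K : Set G) : Set G), ∃ h : G, h ∈ H ∧ h⁻¹ * g.1 ∈ K := by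
    rintro ⟨g, h, hh, k, hk, rfl⟩
    exact ⟨h, hh, by simpa using hk⟩
  choose s hsH hsK using hs
  rw [← Nat.card_prod, ← Nat.card_prod]
  let f : H × K → ((H : Set G) * (K : Set G) : Set G) × (H ⊓ K : Subgroup G) := fun x =>
    let g : ((H : Set G) * (K : Set G) : Set G) := ⟨x.1.1 * x.2.1, Set.mul_mem_mul x.1.2 x.2.2⟩
    (g, ⟨(s g)⁻¹ * x.1.1, H.mul_mem (H.inv_mem (hsH g)) x.1.2, by
      have h1 := K.mul_mem (hsK g) (K.inv_mem x.2.2)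
      have h2 : (s g)⁻¹ * g.1 * (x.2.1)⁻¹ = (s g)⁻¹ * x.1.1 := by
        simp only [g]; group
      rw [h2] at h1
      exact h1⟩)
  apply Nat.card_le_card_of_injective f
  rintro ⟨⟨a, ha⟩, ⟨b, hb⟩⟩ ⟨⟨c, hc⟩, ⟨d, hd⟩⟩ h
  simp only [f, Prod.mk.injEq, Subtype.mk.injEq] at h
  obtain ⟨h1, h2⟩ := h
  have h3 : a = c := by
    simp only [h1] at h2
    exact mul_left_cancel (congrArg Subtype.val h2)
  subst h3
  have h4 : b = d := mul_left_cancel h1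
  subst h4
  rfl

theorem CDaux_arith (M h k ch ck a i c j s ci : ℕ)
    (hpos : 0 < M) (e1 : h * ch = M) (e2 : k * ck = M)
    (l1 : h * k ≤ a * i) (l2 : ch * ck ≤ c * j) (l3 : a ≤ s) (l4 : c ≤ ci)
    (m1 : s * j ≤ M) (m2 : i * ci ≤ M) : s * j = M ∧ i * ci = M ∧ a = s := by
  have t1 : M * M ≤ (a * j) * (i * c) := by
    calc M * M = (h * k) * (ch * ck) := by rw [← e2]; nth_rewrite 1 [e2, ← e1]; ring
      _ ≤ (a * i) * (c * j) := Nat.mul_le_mul l1 l2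
      _ = _ := by ring
  have t2 : a * j ≤ s * j := Nat.mul_le_mul_right _ l3
  have t3 : i * c ≤ i * ci := Nat.mul_le_mul_left _ l4
  have u1 : a * j = M := by
    by_contra hne
    have : a * j < M := by omega
    have := Nat.mul_lt_mul_of_lt_of_le this (t3.trans m2) hpos
    omega
  have u2 : i * c = M := by
    by_contra hne
    have : i * c < M := by omega
    have := Nat.mul_lt_mul_of_le_of_lt (t2.trans m1) this hpos
    omega
  have u3 : s * j = M := by omega
  refine ⟨u3, by omega, ?_⟩
  have hj : 0 < j := by
    rcases Nat.eq_zero_or_pos j with h | h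
    · subst h; omega
    · exact h
  exact Nat.eq_of_mul_eq_mul_right hj (u1.trans u3.symm)

open Pointwise in
theorem CDaux_lattice {G : Type*} [Group G] [Finite G] {H K : Subgroup G}
    (hH : inCD H) (hK : inCD K) :
    inCD (H ⊔ K) ∧ inCD (H ⊓ K) ∧ ∀ g ∈ H ⊔ K, ∃ h ∈ H, ∃ k ∈ K, h * k = g := by
  have hKH : CDmeasure K = CDmeasure H := le_antisymm (hH K) (hK H)
  have hpos : 0 < CDmeasure H := Nat.mul_pos Nat.card_pos Nat.card_pos
  have hsub : ((H : Set G) * (K : Set G) : Set G) ⊆ ((H ⊔ K : Subgroup G) : Set G) :=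
    by
    rintro _ ⟨a, ha, b, hb, rfl⟩
    exact Subgroup.mul_mem_sup ha hb
  have hcs : Subgroup.centralizer ((H ⊔ K : Subgroup G) : Set G) =
      Subgroup.centralizer (H : Set G) ⊓ Subgroup.centralizer (K : Set G) := by
    apply le_antisymm
    · exact le_inf (Subgroup.centralizer_le (SetLike.coe_subset_coe.2 le_sup_left))
        (Subgroup.centralizer_le (SetLike.coe_subset_coe.2 le_sup_right))
    · rw [Subgroup.le_centralizer_iff]
      exact sup_le (Subgroup.le_centralizer_iff.1 inf_le_left)
        (Subgroup.le_centralizer_iff.1 inf_le_right)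
  have hci : ((Subgroup.centralizer (H : Set G) : Set G) *
      (Subgroup.centralizer (K : Set G) : Set G) : Set G) ⊆
      (Subgroup.centralizer ((H ⊓ K : Subgroup G) : Set G) : Set G) := by
    rintro _ ⟨a, ha, b, hb, rfl⟩
    exact Subgroup.mul_mem _ (Subgroup.centralizer_le (SetLike.coe_subset_coe.2 inf_le_left) ha)
      (Subgroup.centralizer_le (SetLike.coe_subset_coe.2 inf_le_right) hb)
  have l1 := CDaux_card_mul_le H K
  have l2 := CDaux_card_mul_le (Subgroup.centralizer (H : Set G)) (Subgroup.centralizer (K : Set G))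
  rw [← hcs] at l2
  obtain ⟨r1, r2, r3⟩ := CDaux_arith (CDmeasure H) _ _ _ _ _ _ _ _ _ _ hpos rfl hKH l1 l2
    (Nat.card_mono (Set.toFinite _) hsub) (Nat.card_mono (Set.toFinite _) hci)
    (hH (H ⊔ K)) (hH (H ⊓ K))
  refine ⟨fun L => (hH L).trans_eq r1.symm, fun L => (hH L).trans_eq r2.symm, ?_⟩
  have heq : ((H : Set G) * (K : Set G) : Set G) = ((H ⊔ K : Subgroup G) : Set G) := by
    apply Set.eq_of_subset_of_ncard_le hsub _ (Set.toFinite _)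
    exact r3.ge
  intro g hg
  have : g ∈ ((H : Set G) * (K : Set G) : Set G) := by rw [heq]; exact hg
  obtain ⟨h, hh, k, hk, e⟩ := this
  exact ⟨h, hh, k, hk, e⟩

theorem CDaux_conj {G : Type*} [Group G] [Finite G] {H : Subgroup G} (hH : inCD H) (x : G) :
    inCD (H.map (MulAut.conj x).toMonoidHom) := by
  intro L
  refine (hH L).trans ?_
  have hinj : Function.Injective (MulAut.conj x).toMonoidHom := (MulAut.conj x).injective
  unfold CDmeasure
  rw [Subgroup.card_map_of_injective hinj]
  apply Nat.mul_le_mul_left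
  rw [← Subgroup.card_map_of_injective (K := Subgroup.centralizer (H : Set G)) hinj]
  exact Nat.card_mono (Set.toFinite _)
    (Subgroup.map_centralizer_le_centralizer_image (H : Set G) (MulAut.conj x).toMonoidHom)

theorem CDaux_normal {G : Type*} [Group G] [Finite G]
    (hqa : ∀ K K' : Subgroup G, inCD K → inCD K' →
      Subgroup.center G < K → K ≤ K' → K' < ⊤ → K = K')
    {M : Subgroup G} (hM : inCD M) (hz : Subgroup.center G < M) (ht : M < ⊤) : M.Normal := by
  have key : ∀ x : G, M.map (MulAut.conj x).toMonoidHom ≤ M := by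
    intro x
    obtain ⟨hs, -, hp⟩ := CDaux_lattice hM (CDaux_conj hM x)
    by_cases htop : M ⊔ M.map (MulAut.conj x).toMonoidHom = ⊤
    · exfalso
      rw [htop] at hp
      apply ht.ne
      obtain ⟨m, hm, k, ⟨n, hn, rfl⟩, e⟩ := hp x⁻¹ trivial
      have hx : x ∈ M := by
        have : x = m⁻¹ * n⁻¹ := by
          have e' : m * (x * n * x⁻¹) = x⁻¹ := e
          have e2 : m * x * n = 1 := by
            have := congrArg (· * x) e'
            simpa [mul_assoc] using this
          calc x = m⁻¹ * (m * x * n) * n⁻¹ := by group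
            _ = _ := by rw [e2]; simp
        rw [this]
        exact M.mul_mem (M.inv_mem hm) (M.inv_mem hn)
      have hle : M.map (MulAut.conj x).toMonoidHom ≤ M := by
        rintro _ ⟨y, hy, rfl⟩
        exact M.mul_mem (M.mul_mem hx hy) (M.inv_mem hx)
      rw [← htop, sup_eq_left.2 hle]
    · have := hqa _ _ hM hs hz le_sup_left (lt_top_iff_ne_top.2 htop)
      exact sup_eq_left.1 this.symm
  exact ⟨fun n hn g => key g ⟨n, hn, rfl⟩⟩

theorem CDaux_pair {G : Type*} [Group G] [Finite G]
    (hqa : ∀ K K' : Subgroup G, inCD K → inCD K' →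
      Subgroup.center G < K → K ≤ K' → K' < ⊤ → K = K')
    {A B : Subgroup G} (hA : inCD A ∧ Subgroup.center G < A ∧ A < ⊤)
    (hB : inCD B ∧ Subgroup.center G < B ∧ B < ⊤) (hne : A ≠ B) :
    (∀ x, x ∈ A → x ∈ B → x ∈ Subgroup.center G) ∧ (∀ g : G, ∃ a ∈ A, ∃ b ∈ B, a * b = g) ∧
      ∀ a ∈ A, ∀ b ∈ B, ⁅a, b⁆ ∈ Subgroup.center G := by
  obtain ⟨hs, hi, hp⟩ := CDaux_lattice hA.1 hB.1
  have hle : A ⊓ B ≤ Subgroup.center G := by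
    have h1 : Subgroup.center G ≤ A ⊓ B := le_inf hA.2.1.le hB.2.1.le
    rcases h1.lt_or_eq with h | h
    · exfalso
      exact hne ((hqa _ _ hi hA.1 h inf_le_left hA.2.2).symm.trans
        (hqa _ _ hi hB.1 h inf_le_right hB.2.2))
    · exact h.ge
  have htop : A ⊔ B = ⊤ := by
    by_contra h
    have h := lt_top_iff_ne_top.2 h
    exact hne ((hqa _ _ hA.1 hs hA.2.1 le_sup_left h).trans
        (hqa _ _ hB.1 hs hB.2.1 le_sup_right h).symm)
  have hAn := CDaux_normal hqa hA.1 hA.2.1 hA.2.2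
  have hBn := CDaux_normal hqa hB.1 hB.2.1 hB.2.2
  refine ⟨fun x hx hy => hle ⟨hx, hy⟩, fun g => hp g (htop ▸ trivial), fun a ha b hb => ?_⟩
  exact hle (Subgroup.commutator_le_inf A B (Subgroup.commutator_mem_commutator ha hb))

/-- In a group of class two, an element with central `p`-th power commutes with `p`-th powers. -/
theorem CDaux_comm_pow {G : Type*} [Group G] (p : ℕ) (x g : G)
    (hc : ⁅x, g⁆ ∈ Subgroup.center G) (hx : x ^ p ∈ Subgroup.center G) :
    ⁅x, g⁆ ^ p = 1 ∧ x * g ^ p = g ^ p * x := by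
  have hcc : ∀ y : G, Commute y ⁅x, g⁆ := fun y => Subgroup.mem_center_iff.1 hc y
  have h1 : g⁻¹⁻¹ * x * g⁻¹ = ⁅x, g⁆⁻¹ * x := by
    rw [commutatorElement_def]; group
  have e1 : (g * x * g⁻¹) ^ p = (⁅x, g⁆⁻¹ * x) ^ p := by rw [← h1]; simp
  have hcp : ⁅x, g⁆ ^ p = 1 := by
    rw [conj_pow, ((hcc x).inv_right.symm).mul_pow, Subgroup.mem_center_iff.1 hx g,
      mul_inv_cancel_right] at e1
    have : ⁅x, g⁆⁻¹ ^ p = 1 := by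
      simpa using e1.symm
    rw [inv_pow] at this
    exact inv_eq_one.1 this
  refine ⟨hcp, ?_⟩
  have h2 : x * g * x⁻¹ = ⁅x, g⁆ * g := by
    rw [commutatorElement_def]; group
  have e2 : (x * g * x⁻¹) ^ p = (⁅x, g⁆ * g) ^ p := by rw [h2]
  rw [conj_pow, ((hcc g).symm).mul_pow, hcp, one_mul] at e2
  exact mul_inv_eq_iff_eq_mul.1 e2

theorem CDaux_omega {G : Type*} [Group G] [Finite G] (hG : inCD (⊤ : Subgroup G))
    (hab : ∀ x y : G, ⁅x, y⁆ ∈ Subgroup.center G)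
    (φ : G →* G ⧸ Subgroup.center G) (p : ℕ) (hφ : ∀ x, φ x = QuotientGroup.mk (x ^ p)) :
    inCD φ.ker := by
  intro L
  refine (hG L).trans ?_
  set P := φ.range.comap (QuotientGroup.mk' (Subgroup.center G)) with hP
  have hPc : P ≤ Subgroup.centralizer (φ.ker : Set G) := by
    rintro w ⟨g, hg⟩
    rw [Subgroup.mem_centralizer_iff]
    intro x hx
    have hx' : x ^ p ∈ Subgroup.center G := by
      rw [← QuotientGroup.eq_one_iff, ← hφ]; exact hx
    have hz : (g ^ p)⁻¹ * w ∈ Subgroup.center G := by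
      rw [← QuotientGroup.eq, ← hφ]; exact hg
    have h1 := (CDaux_comm_pow p x g (hab x g) hx').2
    have h2 := Subgroup.mem_center_iff.1 hz x
    have : w = g ^ p * ((g ^ p)⁻¹ * w) := by group
    rw [this, ← mul_assoc, h1, mul_assoc, h2]
    group
  have hcard : Nat.card P = Nat.card φ.range * Nat.card (Subgroup.center G) := by
    have h1 : P.index = φ.range.index :=
      Subgroup.index_comap_of_surjective _ (QuotientGroup.mk'_surjective _)
    have h2 := P.card_mul_index
    have h3 := φ.range.card_mul_index
    have h4 := (Subgroup.center G).card_mul_index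
    rw [Subgroup.index_eq_card, ← h3] at h4
    rw [h1, ← h4] at h2
    have : 0 < φ.range.index := Nat.pos_of_ne_zero Subgroup.index_ne_zero_of_finite
    apply Nat.eq_of_mul_eq_mul_right this
    rw [h2]; ring
  have hk : Nat.card φ.ker * Nat.card φ.range = Nat.card G := by
    rw [← Subgroup.index_ker, Subgroup.card_mul_index]
  calc CDmeasure (⊤ : Subgroup G) = Nat.card G * Nat.card (Subgroup.center G) := by
        unfold CDmeasure
        rw [Subgroup.coe_top, Subgroup.centralizer_univ, Subgroup.card_top]
    _ = Nat.card φ.ker * Nat.card P := by rw [hcard, ← hk]; ring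
    _ ≤ CDmeasure φ.ker := Nat.mul_le_mul_left _ (Nat.card_mono (Set.toFinite _) hPc)

/-- if `G ∈ CD(G)` and `Z(G) ∈ CD(G)`, and the interval
`⟦Z(G), G⟧` in `CD(G)` is a quasi-antichain with at least three pairwise
distinct atoms, then there is a prime `p` such that `G/Z(G)` and `[G,G]` are
elementary abelian `p`-groups. -/
theorem stmt5 {G : Type*} [Group G] [Finite G]
    (hG : inCD (⊤ : Subgroup G)) (hZ : inCD (Subgroup.center G))
    (hqa : ∀ K K' : Subgroup G, inCD K → inCD K' →
      Subgroup.center G < K → K ≤ K' → K' < ⊤ → K = K')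
    (hthree : ∃ K1 K2 K3 : Subgroup G,
      (inCD K1 ∧ Subgroup.center G < K1 ∧ K1 < ⊤) ∧
      (inCD K2 ∧ Subgroup.center G < K2 ∧ K2 < ⊤) ∧
      (inCD K3 ∧ Subgroup.center G < K3 ∧ K3 < ⊤) ∧
      K1 ≠ K2 ∧ K1 ≠ K3 ∧ K2 ≠ K3) :
    ∃ p : ℕ, p.Prime ∧
      (∀ x y : G ⧸ Subgroup.center G, x * y = y * x) ∧
      (∀ x : G ⧸ Subgroup.center G, x ^ p = 1) ∧
      (∀ x y : commutator G, x * y = y * x) ∧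
      (∀ x : commutator G, x ^ p = 1) := by
  obtain ⟨K1, K2, K3, h1, h2, h3, n12, n13, n23⟩ := hthree
  obtain ⟨i12, s12, c12⟩ := CDaux_pair hqa h1 h2 n12
  obtain ⟨i13, s13, c13⟩ := CDaux_pair hqa h1 h3 n13
  obtain ⟨i23, s23, c23⟩ := CDaux_pair hqa h2 h3 n23
  have mkc : ∀ x y : G, ⁅x, y⁆ ∈ Subgroup.center G ↔
      Commute (x : G ⧸ Subgroup.center G) (y : G ⧸ Subgroup.center G) := by
    intro x y
    rw [← QuotientGroup.eq_one_iff, ← commutatorElement_eq_one_iff_commute]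
    rfl
  have hK1 : ∀ a ∈ K1, ∀ g : G, Commute (a : G ⧸ Subgroup.center G) (g : G ⧸ Subgroup.center G) := by
    intro a ha g
    obtain ⟨b, hb, c, hc, rfl⟩ := s23 g
    exact ((mkc _ _).1 (c12 a ha b hb)).mul_right ((mkc _ _).1 (c13 a ha c hc))
  have hK2 : ∀ a ∈ K2, ∀ g : G, Commute (a : G ⧸ Subgroup.center G) (g : G ⧸ Subgroup.center G) := by
    intro a ha g
    obtain ⟨b, hb, c, hc, rfl⟩ := s13 g
    exact (hK1 b hb a).symm.mul_right ((mkc _ _).1 (c23 a ha c hc))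
  have hcomm : ∀ x y : G, Commute (x : G ⧸ Subgroup.center G) (y : G ⧸ Subgroup.center G) := by
    intro x y
    obtain ⟨b, hb, c, hc, rfl⟩ := s12 x
    exact (hK1 b hb y).mul_left (hK2 c hc y)
  have hab : ∀ x y : G, ⁅x, y⁆ ∈ Subgroup.center G := fun x y => (mkc x y).2 (hcomm x y)
  -- a prime `p` and an element of `K1` whose image has order `p`
  obtain ⟨y, hyK, hyZ⟩ := SetLike.exists_of_lt h1.2.1
  have hone : orderOf (y : G ⧸ Subgroup.center G) ≠ 1 := by
    rw [Ne, orderOf_eq_one_iff, QuotientGroup.eq_one_iff]; exact hyZ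
  obtain ⟨p, hp, n, hn⟩ := Nat.exists_prime_and_dvd hone
  have hnpos : 0 < n := by
    have := orderOf_pos (y : G ⧸ Subgroup.center G)
    rw [hn] at this
    exact Nat.pos_of_mul_pos_left this
  have hu1 : y ^ n ∉ Subgroup.center G := by
    rw [← QuotientGroup.eq_one_iff, QuotientGroup.mk_pow]
    intro h
    have h := Nat.le_of_dvd hnpos (orderOf_dvd_of_pow_eq_one h)
    rw [hn] at h
    have := hp.two_le
    nlinarith
  have hu2 : (y ^ n) ^ p ∈ Subgroup.center G := by
    rw [← pow_mul, mul_comm, ← hn, ← QuotientGroup.eq_one_iff, QuotientGroup.mk_pow]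
    exact pow_orderOf_eq_one _
  let φ : G →* G ⧸ Subgroup.center G :=
    { toFun := fun x => QuotientGroup.mk (x ^ p)
      map_one' := by simp
      map_mul' := fun x y => by
        rw [QuotientGroup.mk_pow, QuotientGroup.mk_mul, (hcomm x y).mul_pow]
        rfl }
  have hφ : ∀ x, φ x = QuotientGroup.mk (x ^ p) := fun x => rfl
  have hker : ∀ x, x ∈ φ.ker ↔ x ^ p ∈ Subgroup.center G := by
    intro x
    rw [MonoidHom.mem_ker, hφ, QuotientGroup.eq_one_iff]
  have hΩ : inCD φ.ker := CDaux_omega hG hab φ p hφ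
  have hzk : Subgroup.center G ≤ φ.ker := fun x hx => (hker x).2 (Subgroup.pow_mem _ hx p)
  have hi : inCD (φ.ker ⊓ K1) := (CDaux_lattice hΩ h1.1).2.1
  have hlt : Subgroup.center G < φ.ker ⊓ K1 :=
    lt_of_le_of_ne (le_inf hzk h1.2.1.le) fun h => by
      apply hu1
      rw [h]
      exact ⟨(hker _).2 hu2, K1.pow_mem hyK n⟩
  have hK1k : K1 ≤ φ.ker := inf_eq_right.1 (hqa _ _ hi h1.1 hlt inf_le_right h1.2.2)
  have htop : φ.ker = ⊤ := by
    by_contra h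
    have h := lt_top_iff_ne_top.2 h
    have heq : K1 = φ.ker := hqa _ _ h1.1 hΩ h1.2.1 hK1k h
    obtain ⟨b, hb, c, hc, e⟩ := s23 y
    have hy : y ^ p ∈ Subgroup.center G := (hker y).1 (hK1k hyK)
    have hφy : φ b * φ c = 1 := by
      rw [← map_mul, e]; exact hK1k hyK
    have hbc : b ^ p * c ^ p ∈ Subgroup.center G := by
      rw [← QuotientGroup.eq_one_iff]; exact hφy
    have hbp : b ^ p ∈ Subgroup.center G := by
      apply i23 _ (K2.pow_mem hb p)
      have := K3.mul_mem (h3.2.1.le hbc) (K3.inv_mem (K3.pow_mem hc p))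
      simpa using this
    have hcp : c ^ p ∈ Subgroup.center G := by
      simpa using Subgroup.mul_mem _ (Subgroup.inv_mem _ hbp) hbc
    have hbZ : b ∈ Subgroup.center G := i12 b (heq ▸ (hker b).2 hbp) hb
    have hcZ : c ∈ Subgroup.center G := i13 c (heq ▸ (hker c).2 hcp) hc
    exact hyZ (e ▸ Subgroup.mul_mem _ hbZ hcZ)
  have hpow : ∀ x : G, x ^ p ∈ Subgroup.center G := fun x => (hker x).1 (htop ▸ trivial)
  have hcen : commutator G ≤ Subgroup.center G := by
    rw [commutator_def, Subgroup.commutator_le]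
    exact fun a _ b _ => hab a b
  have hexp : ∀ x ∈ commutator G, x ^ p = 1 := by
    intro x hx
    rw [commutator_eq_closure] at hx
    induction hx using Subgroup.closure_induction with
    | mem x hx =>
      obtain ⟨a, b, rfl⟩ := hx
      exact (CDaux_comm_pow p a b (hab a b) (hpow a)).1
    | one => simp
    | mul x y hx hy ihx ihy =>
      rw [← commutator_eq_closure] at hx hy
      have : Commute x y := Subgroup.mem_center_iff.1 (hcen hy) x
      rw [this.mul_pow, ihx, ihy, one_mul]
    | inv x hx ih => rw [inv_pow, ih, inv_one]
  refine ⟨p, hp, ?_, ?_, ?_, ?_⟩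
  · intro x y
    induction x using QuotientGroup.induction_on with | _ x =>
    induction y using QuotientGroup.induction_on with | _ y =>
    exact hcomm x y
  · intro x
    induction x using QuotientGroup.induction_on with | _ x =>
    rw [← QuotientGroup.mk_pow, QuotientGroup.eq_one_iff]
    exact hpow x
  · intro x y
    exact Subtype.ext (Subgroup.mem_center_iff.1 (hcen y.2) x.1)
  · intro x
    exact Subtype.ext (hexp x.1 x.2)
end

section
/- Let G be a finite group with G ∈ CD(G) whose commutator subgroup [G,G] is cyclic. Then CD(G) is a quasi-antichain of width w ≥ 3 with G ∈ CD(G) if and only if there exists a prime p such that |[G,G]| = p and G/Z(G) is an elementary abelian p-group of order p². In this case the width is w = p + 1. -/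
/-- `CD(G)` is a quasi-antichain of width `w` with `G ∈ CD(G)`: `G` and `Z(G)`
are in `CD(G)`, every member of `CD(G)` lies between `Z(G)` and `G`, any two
comparable members strictly between `Z(G)` and `G` are equal, and there are
exactly `w` atoms. -/
def IsQACD (G : Type*) [Group G] (w : ℕ) : Prop :=
  inCD (⊤ : Subgroup G) ∧ inCD (Subgroup.center G) ∧
  (∀ K : Subgroup G, inCD K → Subgroup.center G ≤ K) ∧
  (∀ K K' : Subgroup G, inCD K → inCD K' →
    Subgroup.center G < K → K ≤ K' → K' < ⊤ → K = K') ∧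
  {K : Subgroup G | inCD K ∧ Subgroup.center G < K ∧ K < ⊤}.ncard = w

section Aux

open scoped Pointwise commutatorElement

theorem aux_card_mul {G : Type*} [Group G] [Finite G] (H K : Subgroup G) :
    Nat.card ((H : Set G) * (K : Set G) : Set G) * Nat.card (H ⊓ K : Subgroup G)
      = Nat.card H * Nat.card K := by
  have h1 := Subgroup.card_mul_eq_card_subgroup_mul_card_quotient K (H : Set G)
  have h2 := Subgroup.card_mul_index (K.subgroupOf H)
  have h3 : Nat.card (K.subgroupOf H) = Nat.card (H ⊓ K : Subgroup G) := by
    rw [← Subgroup.inf_subgroupOf_left]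
    exact Nat.card_congr (Subgroup.subgroupOfEquivOfLe inf_le_left).toEquiv
  have h4 : (K.subgroupOf H).index
      = Nat.card ((QuotientGroup.mk '' (H : Set G) : Set (G ⧸ K))) := by
    rw [Subgroup.index]
    let f : H ⧸ K.subgroupOf H → ((QuotientGroup.mk '' (H : Set G) : Set (G ⧸ K))) :=
      Quotient.lift (fun h : H => ⟨((h : G) : G ⧸ K), ⟨h, h.2, rfl⟩⟩) (by
        intro a b hab
        have := QuotientGroup.leftRel_apply.1 hab
        apply Subtype.ext
        exact QuotientGroup.eq.2 (by simpa [Subgroup.mem_subgroupOf] using this))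
    apply Nat.card_congr
    apply Equiv.ofBijective f
    constructor
    · intro a b
      induction a using QuotientGroup.induction_on with | _ a
      induction b using QuotientGroup.induction_on with | _ b
      intro hab
      have := QuotientGroup.eq.1 (congrArg Subtype.val hab)
      exact QuotientGroup.eq.2 (by simpa [Subgroup.mem_subgroupOf] using this)
    · rintro ⟨_, h, hh, rfl⟩
      exact ⟨QuotientGroup.mk ⟨h, hh⟩, rfl⟩
  rw [h1, ← h3, ← h4, ← h2]; ring

theorem aux_CD {G : Type*} [Group G] [Finite G] {H K : Subgroup G}
    (hH : inCD H) (hK : inCD K) :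
    inCD (H ⊓ K) ∧ inCD (H ⊔ K) ∧ ((H : Set G) * (K : Set G)) = ((H ⊔ K : Subgroup G) : Set G) := by
  have hsub : ∀ A B : Subgroup G, ((A : Set G) * (B : Set G)) ⊆ ((A ⊔ B : Subgroup G) : Set G) := by
    rintro A B _ ⟨a, ha, b, hb, rfl⟩
    exact Subgroup.mul_mem_sup ha hb
  have c1 := aux_card_mul H K
  have c2 := aux_card_mul (Subgroup.centralizer (H : Set G)) (Subgroup.centralizer (K : Set G))
  have l1 : Nat.card ((H : Set G) * (K : Set G) : Set G) ≤ Nat.card (H ⊔ K : Subgroup G) :=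
    Nat.card_mono (Set.toFinite _) (hsub H K)
  have l2 : Nat.card ((Subgroup.centralizer (H : Set G) : Set G) *
      (Subgroup.centralizer (K : Set G) : Set G) : Set G) ≤
      Nat.card (Subgroup.centralizer ((H ⊓ K : Subgroup G) : Set G)) := by
    apply Nat.card_mono (Set.toFinite _)
    refine (hsub _ _).trans ?_
    have : Subgroup.centralizer (H : Set G) ⊔ Subgroup.centralizer (K : Set G) ≤
      Subgroup.centralizer ((H ⊓ K : Subgroup G) : Set G) :=
      sup_le (Subgroup.centralizer_le (fun x hx => hx.1)) (Subgroup.centralizer_le (fun x hx => hx.2))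
    exact this
  have e3 : Subgroup.centralizer ((H ⊔ K : Subgroup G) : Set G) =
      Subgroup.centralizer (H : Set G) ⊓ Subgroup.centralizer (K : Set G) := by
    apply le_antisymm
    · exact le_inf (Subgroup.centralizer_le (fun x hx => (le_sup_left : H ≤ H ⊔ K) hx))
        (Subgroup.centralizer_le (fun x hx => (le_sup_right : K ≤ H ⊔ K) hx))
    · rw [← Subgroup.le_centralizer_iff]
      refine sup_le ?_ ?_
      · rw [Subgroup.le_centralizer_iff]; exact inf_le_left
      · rw [Subgroup.le_centralizer_iff]; exact inf_le_right
  have i1 := hH (H ⊓ K)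
  have i2 := hH (H ⊔ K)
  have i3 : CDmeasure K = CDmeasure H := le_antisymm (hH K) (hK H)
  have hpos : 0 < CDmeasure H := Nat.mul_pos Nat.card_pos Nat.card_pos
  -- abbreviations
  set a := Nat.card ((H : Set G) * (K : Set G) : Set G) with ha
  set b := Nat.card ((Subgroup.centralizer (H : Set G) : Set G) *
      (Subgroup.centralizer (K : Set G) : Set G) : Set G)
  have m1 : CDmeasure (H ⊓ K) = Nat.card (H ⊓ K : Subgroup G) *
    Nat.card (Subgroup.centralizer ((H ⊓ K : Subgroup G) : Set G)) := rfl
  have m2 : CDmeasure (H ⊔ K) = Nat.card (H ⊔ K : Subgroup G) *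
    Nat.card (Subgroup.centralizer (H : Set G) ⊓ Subgroup.centralizer (K : Set G) : Subgroup G) := by
    rw [← e3]; rfl
  have m3 : CDmeasure H * CDmeasure K = (a * Nat.card (H ⊓ K : Subgroup G)) *
      (b * Nat.card (Subgroup.centralizer (H : Set G) ⊓ Subgroup.centralizer (K : Set G) : Subgroup G)) := by
    rw [c1, c2, CDmeasure, CDmeasure]; ring
  set u := Nat.card (H ⊓ K : Subgroup G)
  set v := Nat.card (Subgroup.centralizer (H : Set G) ⊓ Subgroup.centralizer (K : Set G) : Subgroup G)
  set c := Nat.card (H ⊔ K : Subgroup G) with hc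
  set d := Nat.card (Subgroup.centralizer ((H ⊓ K : Subgroup G) : Set G))
  have hu : 0 < u := Nat.card_pos
  have hv : 0 < v := Nat.card_pos
  have hd : 0 < d := Nat.card_pos
  rw [i3] at m3
  rw [m1] at i1
  rw [m2] at i2
  have k1 : (a * u) * (b * v) ≤ (c * v) * (u * d) := by
    calc (a * u) * (b * v) ≤ (c * u) * (d * v) := by gcongr
      _ = _ := by ring
  have k2 : u * d = CDmeasure H := by
    apply le_antisymm i1
    by_contra hlt
    push Not at hlt
    nlinarith
  have k3 : c * v = CDmeasure H := by
    apply le_antisymm i2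
    by_contra hlt
    push Not at hlt
    nlinarith
  refine ⟨fun L => ?_, fun L => ?_, ?_⟩
  · rw [m1, k2]; exact hH L
  · rw [m2, k3]; exact hH L
  · have hac : c ≤ a := by
      by_contra hlt
      push Not at hlt
      have : (a * u) * (b * v) < (c * v) * (u * d) := by
        calc (a * u) * (b * v) ≤ (a * u) * (d * v) := by gcongr
          _ < (c * u) * (d * v) := by gcongr
          _ = _ := by ring
      rw [← m3, k2, k3] at this
      exact lt_irrefl _ this
    exact Set.eq_of_subset_of_ncard_le (hsub H K) hac (Set.toFinite _)

theorem aux_CD_cc {G : Type*} [Group G] [Finite G] {H : Subgroup G} (hH : inCD H) :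
    Subgroup.center G ≤ H := by
  have h1 : H ≤ Subgroup.centralizer (Subgroup.centralizer (H : Set G) : Set G) :=
    Subgroup.le_centralizer_iff.1 le_rfl
  have h2 := hH (Subgroup.centralizer (H : Set G))
  unfold CDmeasure at h2
  rw [mul_comm] at h2
  have h3 := Nat.le_of_mul_le_mul_right h2 Nat.card_pos
  have h4 : H = Subgroup.centralizer (Subgroup.centralizer (H : Set G) : Set G) :=
    SetLike.coe_injective (Set.eq_of_subset_of_ncard_le h1 h3 (Set.toFinite _))
  rw [h4]
  exact Subgroup.center_le_centralizer _

theorem aux_hom {C : Type*} [Group C] [Finite C] [IsCyclic C] :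
    ∃ e : C →* ℂ, Function.Injective e := by
  have : NeZero (Nat.card C) := ⟨Nat.card_pos.ne'⟩
  have hc : Nat.card C = Nat.card (rootsOfUnity (Nat.card C) ℂ) := by
    exact (HasEnoughRootsOfUnity.natCard_rootsOfUnity ℂ (Nat.card C)).symm
  let E := mulEquivOfCyclicCardEq hc
  refine ⟨(Units.coeHom ℂ).comp ((rootsOfUnity (Nat.card C) ℂ).subtype.comp E.toMonoidHom), ?_⟩
  intro x y hxy
  exact E.injective (Subtype.ext (Units.ext hxy))

theorem aux_card_hom (A : Type*) [Group A] [Finite A] :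
    Finite (A →* ℂ) ∧ Nat.card (A →* ℂ) ≤ Nat.card A := by
  have := Fintype.ofFinite A
  have li := linearIndependent_monoidHom A ℂ
  have hf : Finite (A →* ℂ) := li.finite
  have := Fintype.ofFinite (A →* ℂ)
  refine ⟨hf, ?_⟩
  have := li.fintype_card_le_finrank
  simpa [Nat.card_eq_fintype_card] using this
theorem aux_card_comap {G : Type*} [Group G] [Finite G] (S : Subgroup (G ⧸ Subgroup.center G)) :
    Nat.card (S.comap (QuotientGroup.mk' (Subgroup.center G))) =
      Nat.card S * Nat.card (Subgroup.center G) := by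
  have h1 := Subgroup.card_mul_index (S.comap (QuotientGroup.mk' (Subgroup.center G)))
  rw [Subgroup.index_comap_of_surjective _ (QuotientGroup.mk'_surjective _)] at h1
  have h2 := Subgroup.card_mul_index S
  have h3 := Subgroup.card_eq_card_quotient_mul_card_subgroup (Subgroup.center G)
  have h4 : 0 < S.index := Nat.pos_of_ne_zero Subgroup.index_ne_zero_of_finite
  apply Nat.eq_of_mul_eq_mul_right h4
  rw [h1, h3, ← h2]; ring

theorem aux_measure_top {G : Type*} [Group G] :
    CDmeasure (⊤ : Subgroup G) = Nat.card G * Nat.card (Subgroup.center G) := by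
  unfold CDmeasure
  rw [Subgroup.card_top, Subgroup.coe_top, Subgroup.centralizer_univ]

theorem aux_measure_center {G : Type*} [Group G] :
    CDmeasure (Subgroup.center G) = Nat.card G * Nat.card (Subgroup.center G) := by
  unfold CDmeasure
  rw [Subgroup.centralizer_center, Subgroup.card_top, mul_comm]

theorem aux_allCD {G : Type*} [Group G] [Finite G]
    (hG : inCD (⊤ : Subgroup G)) (hcyc : IsCyclic (commutator G))
    (hcl : ∀ x y : G, ⁅x, y⁆ ∈ Subgroup.center G) (H : Subgroup G)
    (hH : Subgroup.center G ≤ H) : inCD H := by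
  obtain ⟨e, he⟩ := aux_hom (C := commutator G)
  have hmem : ∀ x y : G, ⁅x, y⁆ ∈ commutator G := fun x y =>
    Subgroup.commutator_mem_commutator (Subgroup.mem_top _) (Subgroup.mem_top _)
  have hmul : ∀ a b g : G, ⁅a * b, g⁆ = ⁅a, g⁆ * ⁅b, g⁆ := by
    intro a b g
    have hc := Subgroup.mem_center_iff.1 (hcl b g) a
    have : ⁅a * b, g⁆ = a * ⁅b, g⁆ * (g * a⁻¹ * g⁻¹) := by
      simp only [commutatorElement_def]; group
    rw [this, hc, mul_assoc, ← Subgroup.mem_center_iff.1 (hcl b g)]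
    simp only [commutatorElement_def]; group
  let φ (g : G) : H →* commutator G :=
    { toFun := fun h => ⟨⁅(h : G), g⁆, hmem _ _⟩
      map_one' := by apply Subtype.ext; simp
      map_mul' := fun a b => by apply Subtype.ext; exact hmul _ _ _ }
  have hker (g : G) : (Subgroup.center G).subgroupOf H ≤ (e.comp (φ g)).toHomUnits.ker := by
    intro x hx
    rw [MonoidHom.mem_ker]
    have : φ g x = 1 := by
      apply Subtype.ext
      change ⁅(x : G), g⁆ = 1
      rw [commutatorElement_eq_one_iff_mul_comm]
      exact (Subgroup.mem_center_iff.1 (Subgroup.mem_subgroupOf.1 hx) g).symm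
    apply Units.ext
    simp [this]
  let F (g : G) : (H ⧸ (Subgroup.center G).subgroupOf H) →* ℂ :=
    (Units.coeHom ℂ).comp (QuotientGroup.lift _ _ (hker g))
  have hF : ∀ g g' : G, F g = F g' → g⁻¹ * g' ∈ Subgroup.centralizer (H : Set G) := by
    intro g g' h
    rw [Subgroup.mem_centralizer_iff]
    intro x hx
    have h1 := DFunLike.congr_fun h (QuotientGroup.mk ⟨x, hx⟩)
    have h2 : φ g ⟨x, hx⟩ = φ g' ⟨x, hx⟩ := he h1
    have h3 : ⁅x, g⁆ = ⁅x, g'⁆ := congrArg Subtype.val h2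
    simp only [commutatorElement_def] at h3
    have h4 : g * x⁻¹ * g⁻¹ = g' * x⁻¹ * g'⁻¹ := by
      have := congrArg (fun t => x⁻¹ * t) h3
      simpa [mul_assoc] using this
    have h5 : g * x * g⁻¹ = g' * x * g'⁻¹ := by
      have := congrArg (fun t => t⁻¹) h4
      simpa [mul_assoc] using this
    calc x * (g⁻¹ * g') = g⁻¹ * (g * x * g⁻¹) * g' := by group
      _ = g⁻¹ * (g' * x * g'⁻¹) * g' := by rw [h5]
      _ = _ := by group
  obtain ⟨hfin, hle⟩ := aux_card_hom (H ⧸ (Subgroup.center G).subgroupOf H)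
  have hidx : Nat.card (G ⧸ Subgroup.centralizer (H : Set G)) ≤
      Nat.card (H ⧸ (Subgroup.center G).subgroupOf H) := by
    refine le_trans ?_ hle
    apply Nat.card_le_card_of_injective
      (fun q : G ⧸ Subgroup.centralizer (H : Set G) => F q.out)
    intro a b hab
    have := QuotientGroup.eq.2 (hF _ _ hab)
    simpa using this
  have h1 := Subgroup.card_eq_card_quotient_mul_card_subgroup (Subgroup.centralizer (H : Set G))
  have h2 := Subgroup.card_eq_card_quotient_mul_card_subgroup ((Subgroup.center G).subgroupOf H)
  rw [Nat.card_congr (Subgroup.subgroupOfEquivOfLe hH).toEquiv] at h2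
  have key : CDmeasure (⊤ : Subgroup G) ≤ CDmeasure H := by
    rw [aux_measure_top]
    unfold CDmeasure
    rw [h1, h2]
    calc _ ≤ Nat.card (H ⧸ (Subgroup.center G).subgroupOf H) *
          Nat.card (Subgroup.centralizer (H : Set G)) * Nat.card (Subgroup.center G) := by gcongr
      _ = _ := by ring
  exact fun K => (hG K).trans key

theorem aux_atoms {G : Type*} [Group G] [Finite G] {w : ℕ} (hQ : IsQACD G w)
    {K L : Subgroup G} (hK : inCD K ∧ Subgroup.center G < K ∧ K < ⊤)
    (hL : inCD L ∧ Subgroup.center G < L ∧ L < ⊤) (hne : K ≠ L) :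
    K ⊓ L = Subgroup.center G ∧ ((K : Set G) * (L : Set G)) = Set.univ ∧
    Nat.card K * Nat.card L = Nat.card G * Nat.card (Subgroup.center G) := by
  obtain ⟨-, -, -, hanti, -⟩ := hQ
  obtain ⟨h1, h2, h3⟩ := aux_CD hK.1 hL.1
  have e1 : K ⊓ L = Subgroup.center G := by
    by_contra hn
    have hlt : Subgroup.center G < K ⊓ L := lt_of_le_of_ne (le_inf hK.2.1.le hL.2.1.le) (Ne.symm hn)
    have a1 := hanti _ _ h1 hK.1 hlt inf_le_left hK.2.2
    have a2 := hanti _ _ h1 hL.1 hlt inf_le_right hL.2.2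
    exact hne (a1.symm.trans a2)
  have e2 : K ⊔ L = ⊤ := by
    by_contra hn
    have hlt : K ⊔ L < ⊤ := lt_top_iff_ne_top.2 hn
    have a1 := hanti _ _ hK.1 h2 hK.2.1 le_sup_left hlt
    have a2 := hanti _ _ hL.1 h2 hL.2.1 le_sup_right hlt
    exact hne (a1.trans a2.symm)
  rw [e2, Subgroup.coe_top] at h3
  refine ⟨e1, h3, ?_⟩
  have := aux_card_mul K L
  rw [← this, h3, e1]
  simp

theorem aux_normal {G : Type*} [Group G] [Finite G] {w : ℕ} (hQ : IsQACD G w)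
    {K : Subgroup G} (hK : inCD K ∧ Subgroup.center G < K ∧ K < ⊤) : K.Normal := by
  have key : ∀ g : G, K.map (MulAut.conj g).toMonoidHom = K := by
    intro g
    by_contra hn
    have hinj : Function.Injective (MulAut.conj g).toMonoidHom := (MulAut.conj g).injective
    have hcd : inCD (K.map (MulAut.conj g).toMonoidHom) := by
      intro M
      refine (hK.1 M).trans ?_
      unfold CDmeasure
      rw [Subgroup.card_map_of_injective hinj]
      gcongr
      rw [← Subgroup.card_map_of_injective (K := Subgroup.centralizer (K : Set G)) hinj]
      apply Nat.card_mono (Set.toFinite _)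
      rintro _ ⟨c, hc, rfl⟩
      rw [SetLike.mem_coe, Subgroup.mem_centralizer_iff]
      rintro _ ⟨k, hk, rfl⟩
      rw [← map_mul, ← map_mul, Subgroup.mem_centralizer_iff.1 hc k hk]
    have hcard : Nat.card (K.map (MulAut.conj g).toMonoidHom) = Nat.card K :=
      Subgroup.card_map_of_injective hinj
    have hat : inCD (K.map (MulAut.conj g).toMonoidHom) ∧
        Subgroup.center G < K.map (MulAut.conj g).toMonoidHom ∧
        K.map (MulAut.conj g).toMonoidHom < ⊤ := by
      refine ⟨hcd, lt_of_le_of_ne (aux_CD_cc hcd) ?_, lt_top_iff_ne_top.2 ?_⟩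
      · intro h
        rw [← h] at hcard
        exact hK.2.1.ne (SetLike.coe_injective
          (Set.eq_of_subset_of_ncard_le hK.2.1.le hcard.ge (Set.toFinite _)))
      · intro h
        rw [h, Subgroup.card_top] at hcard
        exact hK.2.2.ne (Subgroup.eq_top_of_card_eq _ hcard.symm)
    obtain ⟨-, h2, -⟩ := aux_atoms hQ hK hat (Ne.symm hn)
    have : g⁻¹ ∈ (K : Set G) * (K.map (MulAut.conj g).toMonoidHom : Set G) := by
      rw [h2]; trivial
    obtain ⟨k, hk, _, ⟨k1, hk1, rfl⟩, h⟩ := this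
    have hg : g ∈ K := by
      have h' : k * (g * k1 * g⁻¹) = g⁻¹ := h
      have : g = k⁻¹ * k1⁻¹ := by
        have h3 : k * g * k1 = 1 := by
          calc k * g * k1 = k * (g * k1 * g⁻¹) * g := by group
            _ = 1 := by rw [h']; group
        calc g = k⁻¹ * (k * g * k1) * k1⁻¹ := by group
          _ = _ := by rw [h3]; group
      rw [this]
      exact K.mul_mem (K.inv_mem hk) (K.inv_mem hk1)
    apply hn
    apply SetLike.coe_injective
    refine Set.eq_of_subset_of_ncard_le ?_ hcard.ge (Set.toFinite _)
    rintro _ ⟨x, hx, rfl⟩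
    exact K.mul_mem (K.mul_mem hg hx) (K.inv_mem hg)
  constructor
  intro n hn g
  have : (MulAut.conj g).toMonoidHom n ∈ K.map (MulAut.conj g).toMonoidHom := ⟨n, hn, rfl⟩
  rw [key g] at this
  exact this

theorem aux_comm {G : Type*} [Group G] [Finite G] {w : ℕ} (hQ : IsQACD G w)
    {K L : Subgroup G} (hK : inCD K ∧ Subgroup.center G < K ∧ K < ⊤)
    (hL : inCD L ∧ Subgroup.center G < L ∧ L < ⊤) (hne : K ≠ L)
    {x y : G} (hx : x ∈ K) (hy : y ∈ L) :
    (x : G ⧸ Subgroup.center G) * y = y * x := by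
  obtain ⟨h1, -, -⟩ := aux_atoms hQ hK hL hne
  have n1 := aux_normal hQ hK
  have n2 := aux_normal hQ hL
  rw [← QuotientGroup.mk_mul, ← QuotientGroup.mk_mul, QuotientGroup.eq, ← h1]
  constructor
  · have : (x * y)⁻¹ * (y * x) = (y⁻¹ * x⁻¹ * y⁻¹⁻¹) * x := by group
    rw [this]
    exact K.mul_mem (n1.conj_mem _ (K.inv_mem hx) _) hx
  · have : (x * y)⁻¹ * (y * x) = y⁻¹ * (x⁻¹ * y * x⁻¹⁻¹) := by group
    rw [this]
    exact L.mul_mem (L.inv_mem hy) (n2.conj_mem _ hy _)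

theorem aux_three {G : Type*} [Group G] [Finite G] {w : ℕ} (hQ : IsQACD G w)
    {K L M : Subgroup G} (hK : inCD K ∧ Subgroup.center G < K ∧ K < ⊤)
    (hL : inCD L ∧ Subgroup.center G < L ∧ L < ⊤)
    (hM : inCD M ∧ Subgroup.center G < M ∧ M < ⊤)
    (h1 : K ≠ L) (h2 : K ≠ M) (h3 : L ≠ M) (x y : G) :
    (x : G ⧸ Subgroup.center G) * y = y * x := by
  have gen : ∀ {A B C : Subgroup G}, (inCD A ∧ Subgroup.center G < A ∧ A < ⊤) →
      (inCD B ∧ Subgroup.center G < B ∧ B < ⊤) → (inCD C ∧ Subgroup.center G < C ∧ C < ⊤) →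
      A ≠ B → A ≠ C → B ≠ C → ∀ a ∈ A, ∀ g : G, Commute (a : G ⧸ Subgroup.center G) g := by
    intro A B C hA hB hC hAB hAC hBC a ha g
    have : g ∈ (B : Set G) * (C : Set G) := by
      rw [(aux_atoms hQ hB hC hBC).2.1]; trivial
    obtain ⟨b, hb, c, hc, rfl⟩ := this
    change Commute _ ((b * c : G) : G ⧸ Subgroup.center G)
    rw [QuotientGroup.mk_mul]
    exact Commute.mul_right (aux_comm hQ hA hB hAB ha hb) (aux_comm hQ hA hC hAC ha hc)
  have : x ∈ (K : Set G) * (L : Set G) := by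
    rw [(aux_atoms hQ hK hL h1).2.1]; trivial
  obtain ⟨b, hb, c, hc, rfl⟩ := this
  change Commute ((b * c : G) : G ⧸ Subgroup.center G) y
  rw [QuotientGroup.mk_mul]
  exact Commute.mul_left (gen hK hL hM h1 h2 h3 b hb y) (gen hL hK hM h1.symm h3 h2 c hc y)

theorem aux_prime {G : Type*} [Group G] [Finite G] {w : ℕ} (hQ : IsQACD G w)
    (hall : ∀ H : Subgroup G, Subgroup.center G ≤ H → inCD H)
    {K : Subgroup G} (hK : inCD K ∧ Subgroup.center G < K ∧ K < ⊤) :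
    ∃ r : ℕ, r.Prime ∧ Nat.card K = r * Nat.card (Subgroup.center G) ∧
      ∀ x ∈ K, (x : G ⧸ Subgroup.center G) ^ r = 1 := by
  obtain ⟨x, hxK, hxZ⟩ := SetLike.exists_of_lt hK.2.1
  set y : G ⧸ Subgroup.center G := (x : G ⧸ Subgroup.center G) with hy
  have hy1 : y ≠ 1 := by
    rw [hy, Ne, QuotientGroup.eq_one_iff]; exact hxZ
  have ho : orderOf y ≠ 1 := by rwa [Ne, orderOf_eq_one_iff]
  set r := (orderOf y).minFac with hr
  have hrp : r.Prime := Nat.minFac_prime ho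
  set m := orderOf y / r with hm
  have hord : orderOf (y ^ m) = r :=
    orderOf_pow_orderOf_div (orderOf_pos y).ne' (Nat.minFac_dvd _)
  set S := Subgroup.zpowers (y ^ m) with hS
  have hcS : Nat.card S = r := by rw [hS, Nat.card_zpowers, hord]
  have hle : S.comap (QuotientGroup.mk' (Subgroup.center G)) ≤ K := by
    intro z hz
    obtain ⟨n, hn⟩ := Subgroup.mem_zpowers_iff.1 (Subgroup.mem_comap.1 hz)
    have : ((((x ^ m) ^ n : G)) : G ⧸ Subgroup.center G) = (z : G ⧸ Subgroup.center G) := by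
      rw [QuotientGroup.mk_zpow, QuotientGroup.mk_pow]; exact hn
    have h2 := hK.2.1.le (QuotientGroup.eq.1 this)
    have h3 := K.mul_mem (K.zpow_mem (K.pow_mem hxK m) n) h2
    simpa using h3
  have hZ : Subgroup.center G ≤ S.comap (QuotientGroup.mk' (Subgroup.center G)) := by
    intro z hz
    rw [Subgroup.mem_comap, QuotientGroup.mk'_apply, (QuotientGroup.eq_one_iff z).2 hz]
    exact S.one_mem
  have hcard := aux_card_comap S
  rw [hcS] at hcard
  have hne : Subgroup.center G ≠ S.comap (QuotientGroup.mk' (Subgroup.center G)) := by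
    intro h
    rw [← h] at hcard
    have hp : 0 < Nat.card (Subgroup.center G) := Nat.card_pos
    have := hrp.two_le
    nlinarith
  have heq := hQ.2.2.2.1 _ _ (hall _ hZ) hK.1 (lt_of_le_of_ne hZ hne) hle hK.2.2
  refine ⟨r, hrp, by rw [← heq]; exact hcard, ?_⟩
  intro z hz
  rw [← heq] at hz
  have : (z : G ⧸ Subgroup.center G) ∈ S := hz
  have h1 := orderOf_dvd_natCard (⟨_, this⟩ : S)
  rw [hcS] at h1
  have h2 := orderOf_dvd_iff_pow_eq_one.1 h1
  exact congrArg Subtype.val h2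

theorem aux_forward {G : Type*} [Group G] [Finite G]
    (hG : inCD (⊤ : Subgroup G)) (hcyc : IsCyclic (commutator G)) {w : ℕ} (hw : 3 ≤ w)
    (hQ : IsQACD G w) :
    ∃ p : ℕ, p.Prime ∧ Nat.card (commutator G) = p ∧
        (∀ x y : G ⧸ Subgroup.center G, x * y = y * x) ∧
        (∀ x : G ⧸ Subgroup.center G, x ^ p = 1) ∧
        Nat.card (G ⧸ Subgroup.center G) = p ^ 2 := by
  have hn := hQ.2.2.2.2
  have h3 : 2 < {K : Subgroup G | inCD K ∧ Subgroup.center G < K ∧ K < ⊤}.ncard := by omega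
  obtain ⟨K, hK, L, hL, M, hM, h1, h2, h3⟩ := (Set.two_lt_ncard (Set.toFinite _)).1 h3
  have hab := aux_three hQ hK hL hM h1 h2 h3
  have hcl : ∀ x y : G, ⁅x, y⁆ ∈ Subgroup.center G := by
    intro x y
    rw [← QuotientGroup.eq_one_iff]
    have := hab x y
    rw [commutatorElement_def]
    simp only [QuotientGroup.mk_mul, QuotientGroup.mk_inv]
    rw [this]; group
  have hall := aux_allCD hG hcyc hcl
  obtain ⟨p, hp, cK, eK⟩ := aux_prime hQ hall hK
  obtain ⟨q, hq, cL, eL⟩ := aux_prime hQ hall hL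
  obtain ⟨r, hr, cM, eM⟩ := aux_prime hQ hall hM
  have m1 := (aux_atoms hQ hK hL h1).2.2
  have m2 := (aux_atoms hQ hK hM h2).2.2
  have m3 := (aux_atoms hQ hL hM h3).2.2
  have hKp : 0 < Nat.card K := Nat.card_pos
  have hMp : 0 < Nat.card M := Nat.card_pos
  have hZp : 0 < Nat.card (Subgroup.center G) := Nat.card_pos
  have hpq : p = q := by
    have : Nat.card K = Nat.card L := Nat.eq_of_mul_eq_mul_right hMp (m2.trans m3.symm)
    rw [cK, cL] at this
    exact Nat.eq_of_mul_eq_mul_right hZp this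
  subst hpq
  have hV : Nat.card (G ⧸ Subgroup.center G) = p ^ 2 := by
    have h4 := Subgroup.card_eq_card_quotient_mul_card_subgroup (Subgroup.center G)
    rw [h4, cK, cL] at m1
    apply Nat.eq_of_mul_eq_mul_right (Nat.mul_pos hZp hZp)
    linarith
  have habV : ∀ x y : G ⧸ Subgroup.center G, x * y = y * x := by
    intro x y
    induction x using QuotientGroup.induction_on with | _ x
    induction y using QuotientGroup.induction_on with | _ y
    exact hab x y
  have hexp : ∀ x : G ⧸ Subgroup.center G, x ^ p = 1 := by
    intro x
    induction x using QuotientGroup.induction_on with | _ x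
    have : x ∈ (K : Set G) * (L : Set G) := by
      rw [(aux_atoms hQ hK hL h1).2.1]; trivial
    obtain ⟨b, hb, c, hc, rfl⟩ := this
    change (((b * c : G) : G ⧸ Subgroup.center G)) ^ p = 1
    rw [QuotientGroup.mk_mul, Commute.mul_pow (hab b c), eK b hb, eL c hc, one_mul]
  refine ⟨p, hp, ?_, habV, hexp, hV⟩
  -- the commutator subgroup has order p
  have hle : commutator G ≤ Subgroup.center G := by
    rw [commutator_def, Subgroup.commutator_le]
    exact fun x _ y _ => hcl x y
  have hmul : ∀ a b g : G, ⁅a * b, g⁆ = ⁅a, g⁆ * ⁅b, g⁆ := by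
    intro a b g
    have hc := Subgroup.mem_center_iff.1 (hcl b g) a
    have : ⁅a * b, g⁆ = a * ⁅b, g⁆ * (g * a⁻¹ * g⁻¹) := by
      simp only [commutatorElement_def]; group
    rw [this, hc, mul_assoc, ← Subgroup.mem_center_iff.1 (hcl b g)]
    simp only [commutatorElement_def]; group
  have hpow : ∀ (a g : G) (n : ℕ), ⁅a ^ n, g⁆ = ⁅a, g⁆ ^ n := by
    intro a g n
    induction n with
    | zero => simp
    | succ n ih => rw [pow_succ, hmul, ih, pow_succ]
  have hcp : ∀ x y : G, ⁅x, y⁆ ^ p = 1 := by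
    intro x y
    rw [← hpow, commutatorElement_eq_one_iff_mul_comm]
    have : x ^ p ∈ Subgroup.center G := by
      rw [← QuotientGroup.eq_one_iff, QuotientGroup.mk_pow]; exact hexp _
    exact (Subgroup.mem_center_iff.1 this y).symm
  let T : Subgroup G :=
    { carrier := {z | z ∈ Subgroup.center G ∧ z ^ p = 1}
      one_mem' := ⟨Subgroup.one_mem _, one_pow _⟩
      mul_mem' := by
        rintro a b ⟨ha, ha'⟩ ⟨hb, hb'⟩
        refine ⟨Subgroup.mul_mem _ ha hb, ?_⟩
        have : Commute a b := Subgroup.mem_center_iff.1 hb a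
        rw [this.mul_pow, ha', hb', one_mul]
      inv_mem' := by
        rintro a ⟨ha, ha'⟩
        exact ⟨Subgroup.inv_mem _ ha, by rw [inv_pow, ha', inv_one]⟩ }
  have hT : commutator G ≤ T := by
    rw [commutator_def, Subgroup.commutator_le]
    exact fun x _ y _ => ⟨hcl x y, hcp x y⟩
  obtain ⟨g, hg⟩ := hcyc.exists_generator
  have hog : orderOf g = Nat.card (commutator G) := orderOf_eq_card_of_forall_mem_zpowers hg
  have hgp : g ^ p = 1 := Subtype.ext (hT g.2).2
  rcases (Nat.dvd_prime hp).1 (orderOf_dvd_of_pow_eq_one hgp) with h | h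
  · exfalso
    rw [hog] at h
    have hbot := Subgroup.card_eq_one.1 h
    have : Subgroup.center G = ⊤ := by
      rw [eq_top_iff]
      intro x _
      rw [Subgroup.mem_center_iff]
      intro y
      rw [← commutatorElement_eq_one_iff_mul_comm, ← Subgroup.mem_bot, ← hbot]
      exact Subgroup.commutator_mem_commutator (Subgroup.mem_top _) (Subgroup.mem_top _)
    exact absurd (hK.2.1.trans hK.2.2) (by rw [this]; exact lt_irrefl _)
  · rw [← hog, h]

theorem aux_count {V : Type*} [Group V] [Finite V] {p : ℕ} (hp : p.Prime)
    (hV : Nat.card V = p ^ 2) (hexp : ∀ x : V, x ^ p = 1) :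
    {S : Subgroup V | Nat.card S = p}.ncard = p + 1 := by
  classical
  have := Fintype.ofFinite V
  have := Fintype.ofFinite (Subgroup V)
  have hord : ∀ x : V, x ≠ 1 → orderOf x = p := fun x hx =>
    haveI := Fact.mk hp
    orderOf_eq_prime (hexp x) hx
  let t : Finset (Subgroup V) := Finset.univ.filter (fun S => Nat.card S = p)
  have ht : {S : Subgroup V | Nat.card S = p}.ncard = t.card := by
    rw [← Set.ncard_coe_finset]
    congr 1
    ext S; simp [t]
  have hmaps : Set.MapsTo (fun x : V => Subgroup.zpowers x)
      ((Finset.univ.erase (1 : V) : Finset V) : Set V) (t : Set (Subgroup V)) := by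
    intro x hx
    have hx1 : x ≠ 1 := by simpa using hx
    exact Finset.mem_coe.2 (Finset.mem_filter.2 ⟨Finset.mem_univ _,
      (Nat.card_zpowers x).trans (hord x hx1)⟩)
  have hsum := Finset.card_eq_sum_card_fiberwise hmaps
  have hfib : ∀ S ∈ t, ((Finset.univ.erase (1 : V)).filter
      (fun x => Subgroup.zpowers x = S)).card = p - 1 := by
    intro S hS
    have hS' : Nat.card S = p := (Finset.mem_filter.1 hS).2
    have e : (Finset.univ.erase (1 : V)).filter (fun x => Subgroup.zpowers x = S) =
        (Finset.univ.filter (fun x => x ∈ S)).erase 1 := by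
      ext x
      simp only [Finset.mem_filter, Finset.mem_erase, Finset.mem_univ, and_true, true_and]
      constructor
      · rintro ⟨h1, h2⟩
        exact ⟨h1, h2 ▸ Subgroup.mem_zpowers x⟩
      · rintro ⟨h1, h2⟩
        refine ⟨h1, ?_⟩
        apply SetLike.coe_injective
        refine Set.eq_of_subset_of_ncard_le (Subgroup.zpowers_le.2 h2) ?_ (Set.toFinite _)
        change Nat.card S ≤ Nat.card (Subgroup.zpowers x)
        rw [hS', Nat.card_zpowers, hord x h1]
    rw [e, Finset.card_erase_of_mem (by simp [S.one_mem])]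
    rw [← hS', Nat.card_eq_fintype_card, Fintype.card_subtype]
  rw [Finset.sum_congr rfl hfib, Finset.sum_const, smul_eq_mul,
    Finset.card_erase_of_mem (Finset.mem_univ _), Finset.card_univ,
    ← Nat.card_eq_fintype_card, hV] at hsum
  rw [ht]
  have h2 := hp.two_le
  apply Nat.eq_of_mul_eq_mul_right (show 0 < p - 1 by omega)
  rw [← hsum]
  obtain ⟨q, rfl⟩ : ∃ q, p = q + 1 := ⟨p - 1, by omega⟩
  simp only [Nat.add_sub_cancel]
  have : (q + 1) ^ 2 = (q + 1 + 1) * q + 1 := by ring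
  omega

theorem aux_back {G : Type*} [Group G] [Finite G]
    (hG : inCD (⊤ : Subgroup G)) (hcyc : IsCyclic (commutator G)) {p : ℕ} (hp : p.Prime)
    (hab : ∀ x y : G ⧸ Subgroup.center G, x * y = y * x)
    (hexp : ∀ x : G ⧸ Subgroup.center G, x ^ p = 1)
    (hV : Nat.card (G ⧸ Subgroup.center G) = p ^ 2) : IsQACD G (p + 1) := by
  have hcl : ∀ x y : G, ⁅x, y⁆ ∈ Subgroup.center G := by
    intro x y
    rw [← QuotientGroup.eq_one_iff]
    have := hab x y
    rw [commutatorElement_def]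
    simp only [QuotientGroup.mk_mul, QuotientGroup.mk_inv]
    rw [this]; group
  have hall := aux_allCD hG hcyc hcl
  set π := QuotientGroup.mk' (Subgroup.center G) with hπ
  have hsurj : Function.Surjective π := QuotientGroup.mk'_surjective _
  have hZp : 0 < Nat.card (Subgroup.center G) := Nat.card_pos
  have hcG := Subgroup.card_eq_card_quotient_mul_card_subgroup (Subgroup.center G)
  rw [hV] at hcG
  have hcm : ∀ K : Subgroup G, Subgroup.center G ≤ K → (K.map π).comap π = K := by
    intro K hK
    rw [Subgroup.comap_map_eq, hπ, QuotientGroup.ker_mk', sup_eq_left.2 hK]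
  have hcard : ∀ K : Subgroup G, Subgroup.center G < K → K < ⊤ → Nat.card (K.map π) = p := by
    intro K h1 h2
    have hc := aux_card_comap (K.map π)
    rw [← hπ, hcm K h1.le] at hc
    have hd := Subgroup.card_subgroup_dvd_card (K.map π)
    rw [hV] at hd
    obtain ⟨i, hi, he⟩ := (Nat.dvd_prime_pow hp).1 hd
    interval_cases i
    · exfalso
      rw [he, pow_zero, one_mul] at hc
      exact h1.ne (SetLike.coe_injective
          (Set.eq_of_subset_of_ncard_le h1.le hc.le (Set.toFinite _)))
    · simpa using he
    · exfalso
      rw [he, ← hcG] at hc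
      exact h2.ne (Subgroup.eq_top_of_card_eq _ hc)
  refine ⟨hG, ?_, fun K => aux_CD_cc, ?_, ?_⟩
  · exact hall _ le_rfl
  · intro K K' _ _ h1 h2 h3
    have c1 := hcard K h1 (lt_of_le_of_lt h2 h3)
    have c2 := hcard K' (lt_of_lt_of_le h1 h2) h3
    rw [← hcm K h1.le, ← hcm K' (h1.le.trans h2)]
    congr 1
    apply SetLike.coe_injective
    exact Set.eq_of_subset_of_ncard_le (Subgroup.map_mono h2) (c2.trans c1.symm).le (Set.toFinite _)
  · rw [← aux_count hp hV hexp]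
    rw [← Set.ncard_image_of_injective _ (Subgroup.comap_injective hsurj)]
    congr 1
    ext K
    constructor
    · rintro ⟨_, h1, h2⟩
      exact ⟨K.map π, hcard K h1 h2, hcm K h1.le⟩
    · rintro ⟨S, hS, rfl⟩
      have hc := aux_card_comap S
      rw [← hπ, show Nat.card S = p from hS] at hc
      have hZ : Subgroup.center G ≤ S.comap π := by
        intro z hz
        rw [Subgroup.mem_comap, hπ, QuotientGroup.mk'_apply, (QuotientGroup.eq_one_iff z).2 hz]
        exact S.one_mem
      have h2 := hp.two_le
      refine ⟨hall _ hZ, lt_of_le_of_ne hZ ?_, lt_top_iff_ne_top.2 ?_⟩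
      · intro h
        rw [← h] at hc
        nlinarith
      · intro h
        rw [h, Subgroup.card_top, hcG] at hc
        have := Nat.eq_of_mul_eq_mul_right hZp hc
        nlinarith

end Aux

/-- if `G ∈ CD(G)` and `[G,G]` is cyclic, then `CD(G)` is a
quasi-antichain of width `w ≥ 3` with `G ∈ CD(G)` if and only if there is a
prime `p` with `|[G,G]| = p` and `G/Z(G)` elementary abelian of order `p²`;
in this case `w = p + 1`. -/
theorem stmt7 {G : Type*} [Group G] [Finite G]
    (hG : inCD (⊤ : Subgroup G)) (hcyc : IsCyclic (commutator G)) :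
    ((∃ w : ℕ, 3 ≤ w ∧ IsQACD G w) ↔
      ∃ p : ℕ, p.Prime ∧ Nat.card (commutator G) = p ∧
        (∀ x y : G ⧸ Subgroup.center G, x * y = y * x) ∧
        (∀ x : G ⧸ Subgroup.center G, x ^ p = 1) ∧
        Nat.card (G ⧸ Subgroup.center G) = p ^ 2) ∧
    (∀ w p : ℕ, 3 ≤ w → IsQACD G w → p.Prime → Nat.card (commutator G) = p →
      w = p + 1) := by
  have key : ∀ p : ℕ, (p.Prime ∧ Nat.card (commutator G) = p ∧
        (∀ x y : G ⧸ Subgroup.center G, x * y = y * x) ∧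
        (∀ x : G ⧸ Subgroup.center G, x ^ p = 1) ∧
        Nat.card (G ⧸ Subgroup.center G) = p ^ 2) → IsQACD G (p + 1) := by
    rintro p ⟨hp, -, hab, hexp, hV⟩
    exact aux_back hG hcyc hp hab hexp hV
  refine ⟨⟨?_, ?_⟩, ?_⟩
  · rintro ⟨w, hw, hQ⟩
    exact aux_forward hG hcyc hw hQ
  · rintro ⟨p, h⟩
    exact ⟨p + 1, by have := h.1.two_le; omega, key p h⟩
  · intro w p hw hQ hp hc
    obtain ⟨p', h⟩ := aux_forward hG hcyc hw hQ
    have hpp : p' = p := h.2.1.symm.trans hc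
    have h2 := key p' h
    rw [← hpp, ← hQ.2.2.2.2, ← h2.2.2.2.2]
end

section
/- Let p be a prime and G a finite p-group such that CD(G) is a quasi-antichain of width w ≥ 3 with G ∈ CD(G), and let a be the positive integer with |G/Z(G)| = p^{2a}. Let t be the number of abelian atoms of CD(G) and s = w − t the number of nonabelian atoms. If t ≥ 2 and s ≥ 2, then: if p = 2 then 3 ≤ t and t ≤ s + 1; and if p is odd then 2·(t − 1) ≤ s. -/
/-- The set of abelian atoms of the quasi-antichain `CD(G)`. -/
def abelianAtoms (G : Type*) [Group G] : Set (Subgroup G) :=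
  {K : Subgroup G | inCD K ∧ Subgroup.center G < K ∧ K < ⊤ ∧ ∀ x y : K, x * y = y * x}

open Subgroup

theorem cdx_card_le {G : Type*} [Group G] [Finite G] (K L : Subgroup G) :
    Nat.card K * Nat.card L ≤ Nat.card ↥(K ⊔ L) * Nat.card ↥(K ⊓ L) := by
  have h1 : L.relIndex K ≤ L.relIndex (K ⊔ L) :=
    relIndex_le_of_le_right le_sup_left (by
      rw [relIndex]; exact FiniteIndex.index_ne_zero)
  have h2 : Nat.card ↥(K ⊓ L) * L.relIndex K = Nat.card K := by
    rw [← inf_relIndex_left K L, ← relIndex_bot_left, ← relIndex_bot_left]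
    exact relIndex_mul_relIndex _ _ _ bot_le inf_le_left
  have h3 : Nat.card L * L.relIndex (K ⊔ L) = Nat.card ↥(K ⊔ L) := by
    rw [← relIndex_bot_left, ← relIndex_bot_left]
    exact relIndex_mul_relIndex _ _ _ bot_le le_sup_right
  rw [← h2, ← h3]
  nlinarith [Nat.mul_le_mul_left (Nat.card ↥(K ⊓ L) * Nat.card L) h1]

theorem cdx_card_eq {G : Type*} [Group G] [Finite G] (K L : Subgroup G) [L.Normal] :
    Nat.card K * Nat.card L = Nat.card ↥(K ⊔ L) * Nat.card ↥(K ⊓ L) := by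
  have h1 : L.relIndex (K ⊔ L) = L.relIndex K := relIndex_sup_right _ _
  have h2 : Nat.card ↥(K ⊓ L) * L.relIndex K = Nat.card K := by
    rw [← inf_relIndex_left K L, ← relIndex_bot_left, ← relIndex_bot_left]
    exact relIndex_mul_relIndex _ _ _ bot_le inf_le_left
  have h3 : Nat.card L * L.relIndex (K ⊔ L) = Nat.card ↥(K ⊔ L) := by
    rw [← relIndex_bot_left, ← relIndex_bot_left]
    exact relIndex_mul_relIndex _ _ _ bot_le le_sup_right
  rw [← h2, ← h3, h1]
  ring

theorem cdx_cent {G : Type*} [Group G] [Finite G] {K : Subgroup G} (hK : inCD K) :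
    inCD (centralizer (K : Set G)) := by
  intro L
  refine (hK L).trans ?_
  unfold CDmeasure
  rw [mul_comm]
  refine Nat.mul_le_mul_left _ (card_le_of_le ?_)
  exact le_centralizer_iff.mp le_rfl

theorem cdx_inf_sup {G : Type*} [Group G] [Finite G] {K L : Subgroup G}
    (hK : inCD K) (hL : inCD L) : inCD (K ⊓ L) ∧ inCD (K ⊔ L) := by
  have e : CDmeasure K = CDmeasure L := le_antisymm (hL K) (hK L)
  have h1 := cdx_card_le K L
  have h2 := cdx_card_le (centralizer (K : Set G)) (centralizer (L : Set G))
  have h3 : Nat.card ↥(centralizer (K : Set G) ⊔ centralizer (L : Set G)) ≤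
      Nat.card (centralizer ((K ⊓ L : Subgroup G) : Set G)) :=
    card_le_of_le (sup_le (centralizer_le (by exact_mod_cast inf_le_left))
      (centralizer_le (by exact_mod_cast inf_le_right)))
  have h4 : Nat.card ↥(centralizer (K : Set G) ⊓ centralizer (L : Set G)) ≤
      Nat.card (centralizer ((K ⊔ L : Subgroup G) : Set G)) := by
    refine card_le_of_le ?_
    rw [le_centralizer_iff, sup_le_iff]
    exact ⟨le_centralizer_iff.mp inf_le_left, le_centralizer_iff.mp inf_le_right⟩
  have key : CDmeasure K * CDmeasure K ≤ CDmeasure (K ⊓ L) * CDmeasure (K ⊔ L) := by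
    nth_rw 2 [e]
    unfold CDmeasure
    have := Nat.mul_le_mul h1 (h2.trans (Nat.mul_le_mul h3 h4))
    nlinarith [this]
  have hpos : 0 < CDmeasure K := Nat.mul_pos Nat.card_pos Nat.card_pos
  have a1 := hK (K ⊓ L)
  have a2 := hK (K ⊔ L)
  constructor
  · intro M
    refine (hK M).trans ?_
    by_contra h
    push Not at h
    nlinarith
  · intro M
    refine (hK M).trans ?_
    by_contra h
    push Not at h
    nlinarith

theorem cdx_atoms {G : Type*} [Group G] [Finite G] {w : ℕ} (hQA : IsQACD G w)
    {K L : Subgroup G} (hK : inCD K) (hL : inCD L) (hK1 : center G < K) (hL1 : center G < L)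
    (hK2 : K < ⊤) (hL2 : L < ⊤) (hne : K ≠ L) : K ⊓ L = center G ∧ K ⊔ L = ⊤ := by
  obtain ⟨-, -, h3, h4, -⟩ := hQA
  obtain ⟨hi, hs⟩ := cdx_inf_sup hK hL
  constructor
  · by_contra h
    have h5 : center G < K ⊓ L := lt_of_le_of_ne (h3 _ hi) (Ne.symm h)
    exact hne ((h4 _ _ hi hK h5 inf_le_left hK2).symm.trans (h4 _ _ hi hL h5 inf_le_right hL2))
  · by_contra h
    have h5 : K ⊔ L < ⊤ := lt_top_iff_ne_top.mpr h
    exact hne ((h4 _ _ hK hs hK1 le_sup_left h5).trans (h4 _ _ hL hs hL1 le_sup_right h5).symm)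

theorem cdx_conj {G : Type*} [Group G] [Finite G] {K : Subgroup G} (hK : inCD K) (g : G) :
    inCD (K.map (MulAut.conj g).toMonoidHom) := by
  have e1 : ∀ H : Subgroup G, Nat.card (H.map (MulAut.conj g).toMonoidHom) = Nat.card H :=
    fun H => Subgroup.card_map_of_injective (MulAut.conj g).injective
  intro M
  refine (hK M).trans ?_
  unfold CDmeasure
  rw [e1 K]
  refine Nat.mul_le_mul_left _ ?_
  rw [← e1 (centralizer (K : Set G))]
  refine card_le_of_le ?_
  rintro _ ⟨x, hx, rfl⟩
  rw [mem_centralizer_iff]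
  rintro _ ⟨y, hy, rfl⟩
  have := mem_centralizer_iff.mp hx y hy
  exact (map_mul (MulAut.conj g) y x).symm.trans
    ((congrArg (MulAut.conj g) this).trans (map_mul (MulAut.conj g) x y))

theorem cdx_normal {G : Type*} [Group G] [Finite G] {p : ℕ} (hp : p.Prime) (hpG : IsPGroup p G)
    {w : ℕ} (hQA : IsQACD G w)
    {K : Subgroup G} (hK : inCD K) (hK1 : center G < K) (hK2 : K < ⊤) : K.Normal := by
  haveI := Fact.mk hp
  haveI : Group.IsNilpotent G := hpG.isNilpotent
  obtain h | ⟨M, hM, hKM⟩ := eq_top_or_exists_le_coatom K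
  · exact absurd h hK2.ne
  have hMn : M.Normal := NormalizerCondition.normal_of_coatom M Group.normalizerCondition_of_isNilpotent hM
  have hle : ∀ g : G, K.map (MulAut.conj g).toMonoidHom ≤ M := by
    rintro g _ ⟨x, hx, rfl⟩
    exact hMn.conj_mem x (hKM hx) g
  have heq : ∀ g : G, K.map (MulAut.conj g).toMonoidHom = K := by
    intro g
    by_contra hne
    have hc := cdx_conj hK g
    have h1 : center G < K.map (MulAut.conj g).toMonoidHom := by
      refine lt_of_le_of_ne (hQA.2.2.1 _ hc) ?_
      intro h
      have : Nat.card (K.map (MulAut.conj g).toMonoidHom) = Nat.card K :=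
        Subgroup.card_map_of_injective (MulAut.conj g).injective
      rw [← h] at this
      exact hK1.ne (Subgroup.eq_of_le_of_card_ge hK1.le this.ge)
    have h2 : K.map (MulAut.conj g).toMonoidHom < ⊤ := (hle g).trans_lt (hM.1.lt_top)
    have := (cdx_atoms hQA hc hK h1 hK1 h2 hK2 hne).2
    exact hM.1 (top_le_iff.mp (this ▸ sup_le (hle g) hKM))
  refine ⟨fun x hx g => ?_⟩
  have : (MulAut.conj g).toMonoidHom x ∈ K.map (MulAut.conj g).toMonoidHom := ⟨x, hx, rfl⟩
  rw [heq] at this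
  exact this

theorem cdx_self {G : Type*} [Group G] [Finite G] {w : ℕ} (hQA : IsQACD G w)
    {K : Subgroup G} (hK : inCD K) (hK1 : center G < K)
    (hab : ∀ x ∈ K, ∀ y ∈ K, x * y = y * x) : centralizer (K : Set G) = K := by
  symm
  refine hQA.2.2.2.1 _ _ hK (cdx_cent hK) hK1 ?_ ?_
  · intro x hx
    rw [mem_centralizer_iff]
    intro y hy
    exact hab y hy x hx
  · rw [lt_top_iff_ne_top]
    intro h
    have : K ≤ center G := by
      intro x hx
      rw [mem_center_iff]
      intro g
      have : g ∈ centralizer (K : Set G) := h ▸ mem_top g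
      exact (mem_centralizer_iff.mp this x hx).symm
    exact absurd this (not_le_of_gt hK1)

/-- The counting lemma. -/
theorem cdx_count {W : Type*} [CommGroup W] [Finite W] {p : ℕ} (hp : p.Prime)
    (hW : IsPGroup p W) (S : Subgroup W) (τ : W → W) (hτ : ∀ x, τ (τ x) = x)
    (hS : ∀ x, x ∈ S ↔ τ x = x) (hne : Nat.card S ≠ Nat.card W) :
    (p = 2 → 2 ≤ Nat.card S ∧ 2 * Nat.card S ≤ Nat.card W) ∧
      (Odd p → 3 * Nat.card S ≤ Nat.card W) := by
  haveI := Fact.mk hp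
  have hmul := S.card_mul_index
  have hpos : 0 < Nat.card S := Nat.card_pos
  have hidx : p ≤ S.index := by
    obtain ⟨n, hn⟩ := hW.index S
    rw [hn]
    rcases n with _ | n
    · simp at hn
      simp [hn] at hne
    · exact Nat.le_self_pow (by omega) p
  refine ⟨?_, ?_⟩
  · rintro rfl
    refine ⟨?_, by nlinarith⟩
    have hev : 2 ∣ Nat.card W := by
      obtain ⟨n, hn⟩ := hW.exists_card_eq
      rw [hn]
      rcases n with _ | n
      · exfalso
        simp at hn
        rw [hn] at hmul
        have := Nat.le_of_dvd (by norm_num) (Dvd.intro_left _ hmul)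
        omega
      · exact dvd_pow_self 2 (by omega)
    classical
    letI := Fintype.ofFinite W
    have hmod := Equiv.Perm.card_fixedPoints_modEq (f := (τ : Function.End W)) (p := 2) (n := 1)
      (by funext x; exact hτ x)
    have hc : Fintype.card (Function.fixedPoints τ) = Nat.card S := by
      rw [← Nat.card_eq_fintype_card]
      refine Nat.card_congr (Equiv.subtypeEquivRight fun x => ?_)
      exact (hS x).symm
    rw [Nat.card_eq_fintype_card] at hev
    have : Fintype.card W % 2 = Nat.card S % 2 := by
      rw [← hc]; exact hmod
    omega
  · intro ho
    have : 3 ≤ p := by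
      rcases ho with ⟨k, hk⟩
      have := hp.two_le
      omega
    nlinarith
/-- Two abelian atoms and the commutator pairing. -/
structure CdxSetup (G C : Type*) [Group G] [CommGroup C] where
  A : Subgroup G
  B : Subgroup G
  c : G →* G →* C
  c_eq_one : ∀ x y, c x y = 1 ↔ x * y = y * x
  nB : B.Normal
  cA : ∀ x, (∀ y ∈ A, c y x = 1) ↔ x ∈ A
  cB : ∀ x, (∀ y ∈ B, c y x = 1) ↔ x ∈ B
  inf : ∀ x, x ∈ A → x ∈ B → x ∈ center G
  dec : ∀ g : G, ∃ x ∈ A, x⁻¹ * g ∈ B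

namespace CdxSetup

variable {G C : Type*} [Group G] [CommGroup C] (S : CdxSetup G C)

theorem c_inv (x y : G) : S.c y x = (S.c x y)⁻¹ := by
  have h := (S.c_eq_one (x * y) (x * y)).mpr rfl
  have hx := (S.c_eq_one x x).mpr rfl
  have hy := (S.c_eq_one y y).mpr rfl
  simp only [map_mul, MonoidHom.mul_apply, hx, hy, one_mul, mul_one] at h
  exact eq_inv_of_mul_eq_one_left h

theorem c_center (x z : G) (hz : z ∈ center G) : S.c x z = 1 := by
  rw [S.c_eq_one]
  exact mem_center_iff.mp hz x

theorem center_c (x z : G) (hz : z ∈ center G) : S.c z x = 1 := by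
  rw [c_inv, S.c_center x z hz, inv_one]

theorem c_AA {x y : G} (hx : x ∈ S.A) (hy : y ∈ S.A) : S.c x y = 1 :=
  (S.cA y).mpr hy x hx

theorem c_BB {x y : G} (hx : x ∈ S.B) (hy : y ∈ S.B) : S.c x y = 1 :=
  (S.cB y).mpr hy x hx

theorem zA {z : G} (hz : z ∈ center G) : z ∈ S.A :=
  (S.cA z).mp fun y _ => S.c_center y z hz

theorem zB {z : G} (hz : z ∈ center G) : z ∈ S.B :=
  (S.cB z).mp fun y _ => S.c_center y z hz

/-- The group of admissible pairings on `A`. -/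
def W : Subgroup (S.A → S.A → C) where
  carrier := {F | (∀ x : S.A, ∃ b ∈ S.B, ∀ x' : S.A, F x' x = S.c x' b) ∧
    (∀ x : S.A, ∃ b ∈ S.B, ∀ x' : S.A, F x x' = S.c x' b)}
  mul_mem' := by
    rintro F F' ⟨h1, h2⟩ ⟨h3, h4⟩
    constructor
    · intro x
      obtain ⟨b, hb, h⟩ := h1 x
      obtain ⟨b', hb', h'⟩ := h3 x
      exact ⟨b * b', mul_mem hb hb', fun x' => by simp [h, h']⟩
    · intro x
      obtain ⟨b, hb, h⟩ := h2 x
      obtain ⟨b', hb', h'⟩ := h4 x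
      exact ⟨b * b', mul_mem hb hb', fun x' => by simp [h, h']⟩
  one_mem' := ⟨fun x => ⟨1, one_mem _, fun x' => by simp⟩,
    fun x => ⟨1, one_mem _, fun x' => by simp⟩⟩
  inv_mem' := by
    rintro F ⟨h1, h2⟩
    constructor
    · intro x
      obtain ⟨b, hb, h⟩ := h1 x
      exact ⟨b⁻¹, inv_mem hb, fun x' => by simp [h]⟩
    · intro x
      obtain ⟨b, hb, h⟩ := h2 x
      exact ⟨b⁻¹, inv_mem hb, fun x' => by simp [h]⟩

/-- Transposition of pairings. -/
def tr (F : S.W) : S.W :=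
  ⟨fun x y => F.1 y x, F.2.2, F.2.1⟩

theorem W_mul (F : S.W) (x y z : S.A) : F.1 x (y * z) = F.1 x y * F.1 x z := by
  obtain ⟨b, hb, h⟩ := F.2.2 x
  simp [h]

theorem W_inv (F : S.W) (x y : S.A) : F.1 x y⁻¹ = (F.1 x y)⁻¹ := by
  obtain ⟨b, hb, h⟩ := F.2.2 x
  simp [h]

theorem W_center (F : S.W) (x y : S.A) (hy : (y : G) ∈ center G) : F.1 x y = 1 := by
  obtain ⟨b, hb, h⟩ := F.2.2 x
  rw [h, S.center_c _ _ hy]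

/-- The subgroup attached to a pairing. -/
def U (F : S.W) : Subgroup G where
  carrier := {g | ∃ x : S.A, (x : G)⁻¹ * g ∈ S.B ∧ ∀ x' : S.A, F.1 x' x = S.c x' g}
  mul_mem' := by
    rintro g h ⟨x, hx, h1⟩ ⟨y, hy, h2⟩
    refine ⟨x * y, ?_, fun x' => ?_⟩
    · have := mul_mem (S.nB.conj_mem _ hx (y : G)⁻¹) hy
      convert this using 1
      push_cast
      group
    · rw [W_mul, h1, h2, map_mul]
  one_mem' := ⟨1, by simp [one_mem], fun x' => by
    rw [S.W_center F x' 1 (one_mem _), map_one]⟩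
  inv_mem' := by
    rintro g ⟨x, hx, h1⟩
    refine ⟨x⁻¹, ?_, fun x' => ?_⟩
    · have := S.nB.conj_mem _ (inv_mem hx) (x : G)
      convert this using 1
      push_cast
      group
    · rw [W_inv, h1, map_inv]

theorem mem_U {F : S.W} {g : G} :
    g ∈ S.U F ↔ ∃ x : S.A, (x : G)⁻¹ * g ∈ S.B ∧ ∀ x' : S.A, F.1 x' x = S.c x' g := Iff.rfl

theorem exists_mem_U (F : S.W) (x : S.A) : ∃ g ∈ S.U F, (x : G)⁻¹ * g ∈ S.B ∧
    ∀ x' : S.A, F.1 x' x = S.c x' g := by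
  obtain ⟨b, hb, h⟩ := F.2.1 x
  have h1 : (x : G)⁻¹ * (x * b) ∈ S.B := by simpa using hb
  have h2 : ∀ x' : S.A, F.1 x' x = S.c x' (x * b) := by
    intro x'
    rw [map_mul, S.c_AA x'.2 x.2, one_mul, h]
  exact ⟨x * b, ⟨x, h1, h2⟩, h1, h2⟩

theorem U_inf (F : S.W) : S.U F ⊓ S.B = center G := by
  apply le_antisymm
  · rintro g ⟨⟨x, hx, h⟩, hg⟩
    have hxB : (x : G) ∈ S.B := by
      have := S.B.mul_mem hg (S.B.inv_mem hx)
      simpa using this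
    have hxz := S.inf x x.2 hxB
    refine S.inf g ((S.cA g).mp fun y hy => ?_) hg
    have := h ⟨y, hy⟩
    rw [S.W_center F _ _ hxz] at this
    exact this.symm
  · intro z hz
    refine ⟨⟨1, by simpa using S.zB hz, fun x' => ?_⟩, S.zB hz⟩
    rw [S.W_center F x' 1 (one_mem _), S.c_center _ _ hz]

theorem U_sup (F : S.W) : S.U F ⊔ S.B = ⊤ := by
  rw [eq_top_iff]
  intro g _
  obtain ⟨x, hx, hg⟩ := S.dec g
  obtain ⟨k, hk, hk1, -⟩ := S.exists_mem_U F ⟨x, hx⟩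
  have : g = k * (((x : G)⁻¹ * k)⁻¹ * (x⁻¹ * g)) := by group
  rw [this]
  exact mul_mem_sup hk (mul_mem (inv_mem hk1) hg)

/-- Expansion of the commutator. -/
theorem c_expand {x y g h : G} (hx : x ∈ S.A) (hy : y ∈ S.A) (hg : x⁻¹ * g ∈ S.B)
    (hh : y⁻¹ * h ∈ S.B) : S.c g h = S.c x h * (S.c y g)⁻¹ := by
  have h1 := S.c_BB hg hh
  have h2 := S.c_AA hx hy
  simp only [map_mul, map_inv, MonoidHom.mul_apply, MonoidHom.inv_apply] at h1
  rw [h2] at h1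
  rw [S.c_inv g y, inv_inv]
  simp only [inv_one, one_mul] at h1
  have h3 : S.c g h = S.c x h * S.c g y * ((S.c g y)⁻¹ * ((S.c x h)⁻¹ * S.c g h)) := by
    group
  rw [h3]
  have h4 : (S.c g y)⁻¹ * ((S.c x h)⁻¹ * S.c g h) = 1 := by
    rw [← h1]
  rw [h4, mul_one]

theorem U_comm (F : S.W) {g h : G} (hg : g ∈ S.U F) (hh : h ∈ S.U (S.tr F)) :
    g * h = h * g := by
  obtain ⟨x, hx, h1⟩ := hg
  obtain ⟨y, hy, h2⟩ := hh
  rw [← S.c_eq_one, S.c_expand x.2 y.2 hx hy, ← h1, ← h2]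
  exact mul_inv_cancel _

theorem U_inj (F F' : S.W) (h : S.U F = S.U F') : F = F' := by
  ext x' x
  obtain ⟨g, hg, hx, h1⟩ := S.exists_mem_U F x
  rw [h] at hg
  obtain ⟨y, hy, h2⟩ := hg
  have hB : ((x⁻¹ * y : S.A) : G) ∈ S.B := by
    have := mul_mem hx (inv_mem hy)
    convert this using 1
    push_cast
    group
  have hz := S.inf _ (x⁻¹ * y : S.A).2 hB
  have h3 := S.W_center F' x' _ hz
  rw [W_mul, W_inv] at h3
  rw [h1, ← h2, inv_mul_eq_one.mp h3]

theorem U_symm_iff [Finite G] {w : ℕ} (hQA : IsQACD G w) (F : S.W)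
    (hU : ∀ F, inCD (S.U F) ∧ center G < S.U F ∧ S.U F < ⊤) :
    (∀ x ∈ S.U F, ∀ y ∈ S.U F, x * y = y * x) ↔ S.tr F = F := by
  constructor
  · intro h
    have h1 := cdx_self hQA (hU F).1 (hU F).2.1 h
    have h2 : S.U (S.tr F) ≤ S.U F := by
      rw [← h1]
      intro y hy
      rw [mem_centralizer_iff]
      intro x hx
      exact S.U_comm F hx hy
    exact S.U_inj _ _ (hQA.2.2.2.1 _ _ (hU _).1 (hU F).1 (hU _).2.1 h2 (hU F).2.2)
  · intro h x hx y hy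
    exact S.U_comm F hx (h.symm ▸ hy)

theorem U_surj {K L : Subgroup G} (hKL : ∀ k ∈ K, ∀ l ∈ L, k * l = l * k)
    (hK1 : K ⊓ S.B = center G) (hK2 : K ⊔ S.B = ⊤) (hL2 : L ⊔ S.B = ⊤) :
    ∃ F : S.W, K ≤ S.U F := by
  have hn := S.nB
  have key : ∀ M : Subgroup G, M ⊔ S.B = ⊤ → ∀ x : S.A, ∃ k ∈ M, (x : G)⁻¹ * k ∈ S.B := by
    intro M hM x
    have : (x : G) ∈ M ⊔ S.B := hM ▸ mem_top _
    rw [← SetLike.mem_coe, mul_normal] at this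
    obtain ⟨k, hk, b, hb, hkb⟩ := this
    refine ⟨k, hk, ?_⟩
    have : (x : G)⁻¹ * k = b⁻¹ := by
      rw [← hkb]; simp
    rw [this]
    exact inv_mem hb
  choose k hk hk' using key K hK2
  choose l hl hl' using key L hL2
  have hF : (fun x' x : S.A => S.c x' (k x)) ∈ S.W := by
    constructor
    · intro x
      refine ⟨(x : G)⁻¹ * k x, hk' x, fun x' => ?_⟩
      rw [map_mul, map_inv, S.c_AA x'.2 x.2]
      simp
    · intro x
      refine ⟨(x : G)⁻¹ * l x, hl' x, fun x' => ?_⟩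
      have h1 := (S.c_eq_one (l x) (k x')).mpr (hKL _ (hk x') _ (hl x)).symm
      rw [S.c_expand x.2 x'.2 (hl' x) (hk' x'), mul_inv_eq_one] at h1
      rw [map_mul, map_inv, S.c_AA x'.2 x.2]
      simpa using h1
  refine ⟨⟨_, hF⟩, fun g hg => ?_⟩
  obtain ⟨x, hx, hxg⟩ := S.dec g
  refine ⟨⟨x, hx⟩, hxg, fun x' => ?_⟩
  have hz : (k ⟨x, hx⟩)⁻¹ * g ∈ center G := by
    rw [← hK1]
    refine ⟨K.mul_mem (K.inv_mem (hk _)) hg, ?_⟩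
    have := mul_mem (inv_mem (hk' ⟨x, hx⟩)) hxg
    simpa using this
  have := S.c_center x' _ hz
  rw [map_mul, map_inv, inv_mul_eq_one] at this
  exact this

end CdxSetup

open scoped commutatorElement

theorem cdx_comm_aux {G : Type*} [Group G] {A B : Subgroup G} [B.Normal] (hs : A ⊔ B = ⊤)
    (g : G) (hA : ∀ x ∈ A, ⁅g, x⁆ ∈ center G) (hB : ∀ x ∈ B, ⁅g, x⁆ ∈ center G) (h : G) :
    ⁅g, h⁆ ∈ center G := by
  have : h ∈ A ⊔ B := hs ▸ mem_top _
  rw [← SetLike.mem_coe, mul_normal] at this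
  obtain ⟨x, hx, y, hy, rfl⟩ := this
  have e : ⁅g, x * y⁆ = ⁅g, x⁆ * (x * ⁅g, y⁆ * x⁻¹) := by
    simp only [commutatorElement_def]
    group
  change ⁅g, x * y⁆ ∈ _
  rw [e]
  exact mul_mem (hA x hx) (Subgroup.Normal.conj_mem inferInstance _ (hB y hy) x)

theorem cdx_comm {G : Type*} [Group G] {A B : Subgroup G} [hAn : A.Normal] [hBn : B.Normal]
    (hs : A ⊔ B = ⊤) (hi : A ⊓ B = center G)
    (hA : ∀ x ∈ A, ∀ y ∈ A, x * y = y * x) (hB : ∀ x ∈ B, ∀ y ∈ B, x * y = y * x)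
    (g h : G) : ⁅g, h⁆ ∈ center G := by
  have inv : ∀ x y : G, ⁅x, y⁆ ∈ center G → ⁅y, x⁆ ∈ center G := by
    intro x y hxy
    rw [← commutatorElement_inv]
    exact inv_mem hxy
  have h1 : ∀ x ∈ A, ∀ y ∈ B, ⁅x, y⁆ ∈ center G := by
    intro x hx y hy
    rw [← hi]
    refine ⟨?_, ?_⟩
    · have := A.mul_mem hx (hAn.conj_mem _ (A.inv_mem hx) y)
      simpa [commutatorElement_def, mul_assoc] using this
    · have := B.mul_mem (hBn.conj_mem _ hy x) (B.inv_mem hy)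
      simpa [commutatorElement_def, mul_assoc] using this
  have h2 : ∀ x ∈ A, ∀ y, ⁅x, y⁆ ∈ center G := fun x hx =>
    cdx_comm_aux hs x (fun y hy => by
      rw [commutatorElement_eq_one_iff_mul_comm.mpr (hA x hx y hy)]; exact one_mem _)
      (fun y hy => h1 x hx y hy)
  have h3 : ∀ x ∈ B, ∀ y, ⁅x, y⁆ ∈ center G := fun x hx =>
    cdx_comm_aux hs x (fun y hy => inv _ _ (h1 y hy x hx)) (fun y hy => by
      rw [commutatorElement_eq_one_iff_mul_comm.mpr (hB x hx y hy)]; exact one_mem _)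
  exact cdx_comm_aux hs g (fun x hx => inv _ _ (h2 x hx g)) (fun x hx => inv _ _ (h3 x hx g)) h

universe u in
theorem cdx_pairing {G : Type u} [Group G] [Finite G] {p : ℕ} (hpG : IsPGroup p G)
    (hZ : ∀ g h : G, ⁅g, h⁆ ∈ center G) :
    ∃ (C : Type u) (_ : CommGroup C) (c : G →* G →* C), Finite C ∧ IsPGroup p C ∧
      ∀ x y, c x y = 1 ↔ x * y = y * x := by
  letI : CommGroup (center G) :=
    { (inferInstance : Group (center G)) with
      mul_comm := fun a b => Subtype.ext (mem_center_iff.mp b.2 a) }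
  have hcen : ∀ x y g : G, g * ⁅x, y⁆ * g⁻¹ = ⁅x, y⁆ := by
    intro x y g
    rw [mem_center_iff.mp (hZ x y) g]
    simp
  let c : G →* G →* center G := MonoidHom.mk'
    (fun x => MonoidHom.mk' (fun y => (⟨⁅x, y⁆, hZ x y⟩ : center G)) (by
      intro y z
      apply Subtype.ext
      change ⁅x, y * z⁆ = ⁅x, y⁆ * ⁅x, z⁆
      rw [← hcen x z y]
      simp only [commutatorElement_def]
      group)) (by
    intro x y
    ext z
    change ⁅x * y, z⁆ = ⁅x, z⁆ * ⁅y, z⁆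
    rw [← mem_center_iff.mp (hZ x z), ← hcen y z x]
    simp only [commutatorElement_def]
    group)
  refine ⟨center G, inferInstance, c, inferInstance, hpG.to_subgroup _, fun x y => ?_⟩
  rw [← commutatorElement_eq_one_iff_mul_comm, Subtype.ext_iff]
  rfl

theorem cdx_W_pgroup {G C : Type*} [Group G] [CommGroup C] [Finite G] [Finite C] {p : ℕ}
    (hp : p.Prime) (hC : IsPGroup p C) (S : CdxSetup G C) : IsPGroup p S.W := by
  haveI := Fact.mk hp
  obtain ⟨n, hn⟩ := hC.exists_card_eq
  intro F
  refine ⟨n, ?_⟩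
  ext x y
  change F.1 x y ^ p ^ n = 1
  rw [← hn]
  exact pow_card_eq_one'

/-- The subgroup of symmetric pairings. -/
def cdxSym {G C : Type*} [Group G] [CommGroup C] (S : CdxSetup G C) : Subgroup S.W where
  carrier := {F | S.tr F = F}
  mul_mem' := by
    intro F F' h h'
    change S.tr F * S.tr F' = F * F'
    rw [show S.tr F = F from h, show S.tr F' = F' from h']
  one_mem' := rfl
  inv_mem' := by
    intro F h
    change (S.tr F)⁻¹ = F⁻¹
    rw [show S.tr F = F from h]

theorem cdx_U_atom {G C : Type*} [Group G] [CommGroup C] [Finite G] {w : ℕ} (hQA : IsQACD G w)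
    (S : CdxSetup G C) (hB : inCD S.B) (hB1 : center G < S.B) (hB2 : S.B < ⊤)
    (hBc : centralizer (S.B : Set G) = S.B) (F : S.W) :
    inCD (S.U F) ∧ center G < S.U F ∧ S.U F < ⊤ := by
  have hn := S.nB
  have hm : Nat.card S.B * Nat.card S.B = Nat.card G * Nat.card (center G) := by
    have : CDmeasure S.B = CDmeasure (⊤ : Subgroup G) := le_antisymm (hQA.1 _) (hB _)
    unfold CDmeasure at this
    rw [hBc] at this
    rw [this, coe_top, centralizer_univ, card_top]
  have hc : ∀ F, Nat.card (S.U F) = Nat.card S.B := by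
    intro F
    have := cdx_card_eq (S.U F) S.B
    rw [S.U_inf, S.U_sup, card_top, ← hm] at this
    exact Nat.eq_of_mul_eq_mul_right Nat.card_pos this
  refine ⟨?_, ?_, ?_⟩
  · intro M
    refine (hB M).trans ?_
    unfold CDmeasure
    rw [hBc, hc F]
    refine Nat.mul_le_mul_left _ ?_
    rw [← hc (S.tr F)]
    refine card_le_of_le ?_
    intro y hy
    rw [mem_centralizer_iff]
    intro x hx
    exact S.U_comm F hx hy
  · refine lt_of_le_of_ne (S.U_inf F ▸ inf_le_left) fun h => ?_
    have := hc F
    rw [← h] at this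
    exact hB1.ne (Subgroup.eq_of_le_of_card_ge hB1.le this.ge)
  · rw [lt_top_iff_ne_top]
    intro h
    have := hc F
    rw [h] at this
    exact hB2.ne (Subgroup.eq_of_le_of_card_ge hB2.le this.le)

/-- for a finite `p`-group `G` with `CD(G)` a quasi-antichain of
width `w ≥ 3`, `G ∈ CD(G)`, and `|G/Z(G)| = p^(2a)`, with `t` the number of
abelian atoms and `s = w - t` the number of nonabelian atoms: if `t ≥ 2` and
`s ≥ 2`, then `3 ≤ t` and `t ≤ s + 1` when `p = 2`, and `2·(t-1) ≤ s` when `p`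
is odd. -/
theorem stmt12 {G : Type*} [Group G] [Finite G] (p : ℕ) (hp : p.Prime)
    (hpG : IsPGroup p G) (w : ℕ) (hw : 3 ≤ w) (hQA : IsQACD G w)
    (a : ℕ) (ha : 0 < a)
    (hcard : Nat.card (G ⧸ Subgroup.center G) = p ^ (2 * a))
    (t : ℕ) (ht : t = (abelianAtoms G).ncard)
    (s : ℕ) (hs : s = w - t) :
    2 ≤ t → 2 ≤ s →
      (p = 2 → 3 ≤ t ∧ t ≤ s + 1) ∧ (Odd p → 2 * (t - 1) ≤ s) := by
  intro ht2 hs2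
  have hfin : (abelianAtoms G).Finite := Set.toFinite _
  obtain ⟨A, B, hA, hB, hAB⟩ := (Set.one_lt_ncard_iff (hs := hfin)).mp (by omega)
  obtain ⟨hA0, hA1, hA2, hA3⟩ := hA
  obtain ⟨hB0, hB1, hB2, hB3⟩ := hB
  have hA3' : ∀ x ∈ A, ∀ y ∈ A, x * y = y * x := fun x hx y hy =>
    congrArg Subtype.val (hA3 ⟨x, hx⟩ ⟨y, hy⟩)
  have hB3' : ∀ x ∈ B, ∀ y ∈ B, x * y = y * x := fun x hx y hy =>
    congrArg Subtype.val (hB3 ⟨x, hx⟩ ⟨y, hy⟩)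
  have hAn := cdx_normal hp hpG hQA hA0 hA1 hA2
  have hBn := cdx_normal hp hpG hQA hB0 hB1 hB2
  have hAc := cdx_self hQA hA0 hA1 hA3'
  have hBc := cdx_self hQA hB0 hB1 hB3'
  obtain ⟨hi, hsup⟩ := cdx_atoms hQA hA0 hB0 hA1 hB1 hA2 hB2 hAB
  obtain ⟨C, _, c, hCf, hCp, hc⟩ := cdx_pairing hpG (cdx_comm hsup hi hA3' hB3')
  let S : CdxSetup G C :=
    { A := A
      B := B
      c := c
      c_eq_one := hc
      nB := hBn
      cA := by
        intro x
        nth_rw 2 [← hAc]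
        rw [mem_centralizer_iff]
        exact forall₂_congr fun y _ => hc y x
      cB := by
        intro x
        nth_rw 2 [← hBc]
        rw [mem_centralizer_iff]
        exact forall₂_congr fun y _ => hc y x
      inf := by
        intro x hx hx'
        rw [← hi]
        exact ⟨hx, hx'⟩
      dec := by
        intro g
        have : g ∈ A ⊔ B := hsup ▸ mem_top _
        rw [← SetLike.mem_coe, mul_normal] at this
        obtain ⟨x, hx, y, hy, rfl⟩ := this
        exact ⟨x, hx, by simpa using hy⟩ }
  have hU := cdx_U_atom hQA S hB0 hB1 hB2 hBc
  have hUB : ∀ F, S.U F ≠ B := by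
    intro F h
    have := S.U_inf F
    rw [h] at this
    exact hB1.ne ((inf_idem B).symm.trans this).symm
  have hinj : Function.Injective S.U := fun F F' h => S.U_inj F F' h
  have hsurj : ∀ K : Subgroup G, inCD K → center G < K → K < ⊤ → K ≠ B → ∃ F, S.U F = K := by
    intro K hK0 hK1 hK2 hKB
    have hC0 := cdx_cent hK0
    have hKC : K ≤ centralizer ((centralizer (K : Set G) : Subgroup G) : Set G) :=
      le_centralizer_iff.mp le_rfl
    have hC2 : centralizer (K : Set G) < ⊤ := by
      rw [lt_top_iff_ne_top]
      intro h
      rw [h, coe_top, centralizer_univ] at hKC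
      exact absurd hKC (not_le_of_gt hK1)
    have hC1 : center G < centralizer (K : Set G) := by
      refine lt_of_le_of_ne (hQA.2.2.1 _ hC0) fun h => ?_
      have h1 : CDmeasure K = CDmeasure (⊤ : Subgroup G) := le_antisymm (hQA.1 _) (hK0 _)
      unfold CDmeasure at h1
      rw [← h, coe_top, centralizer_univ] at h1
      have h2 := Nat.eq_of_mul_eq_mul_right Nat.card_pos h1
      exact hK2.ne (Subgroup.eq_of_le_of_card_ge hK2.le h2.ge)
    have hCB : centralizer (K : Set G) ≠ B := by
      intro h
      rw [h, hBc] at hKC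
      exact hKB (hQA.2.2.2.1 _ _ hK0 hB0 hK1 hKC hB2)
    obtain ⟨e1, e2⟩ := cdx_atoms hQA hK0 hB0 hK1 hB1 hK2 hB2 hKB
    obtain ⟨-, e3⟩ := cdx_atoms hQA hC0 hB0 hC1 hB1 hC2 hB2 hCB
    obtain ⟨F, hF⟩ := S.U_surj (K := K) (L := centralizer (K : Set G))
      (fun k hk l hl => mem_centralizer_iff.mp hl k hk) e1 e2 e3
    exact ⟨F, (hQA.2.2.2.1 _ _ hK0 (hU F).1 hK1 hF (hU F).2.2).symm⟩
  have hwset : {K : Subgroup G | inCD K ∧ center G < K ∧ K < ⊤} =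
      insert B (S.U '' Set.univ) := by
    ext K
    constructor
    · rintro ⟨h0, h1, h2⟩
      by_cases h : K = B
      · exact Or.inl h
      · obtain ⟨F, hF⟩ := hsurj K h0 h1 h2 h
        exact Or.inr ⟨F, trivial, hF⟩
    · rintro (rfl | ⟨F, -, rfl⟩)
      · exact ⟨hB0, hB1, hB2⟩
      · exact hU F
  have htset : abelianAtoms G = insert B (S.U '' (cdxSym S : Set S.W)) := by
    ext K
    constructor
    · rintro ⟨h0, h1, h2, h3⟩
      by_cases h : K = B
      · exact Or.inl h
      · obtain ⟨F, rfl⟩ := hsurj K h0 h1 h2 h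
        refine Or.inr ⟨F, ?_, rfl⟩
        exact (S.U_symm_iff hQA F hU).mp fun x hx y hy =>
          congrArg Subtype.val (h3 ⟨x, hx⟩ ⟨y, hy⟩)
    · rintro (rfl | ⟨F, hF, rfl⟩)
      · exact ⟨hB0, hB1, hB2, hB3⟩
      · exact ⟨(hU F).1, (hU F).2.1, (hU F).2.2, fun x y =>
          Subtype.ext ((S.U_symm_iff hQA F hU).mpr hF x x.2 y y.2)⟩
  have hwc : w = Nat.card S.W + 1 := by
    rw [← hQA.2.2.2.2, hwset, Set.ncard_insert_of_notMem _ (Set.toFinite _),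
      Set.ncard_image_of_injective _ hinj, Set.ncard_univ]
    rintro ⟨F, -, hF⟩
    exact hUB F hF
  have htc : t = Nat.card (cdxSym S) + 1 := by
    rw [ht, htset, Set.ncard_insert_of_notMem _ (Set.toFinite _),
      Set.ncard_image_of_injective _ hinj]
    · rfl
    · rintro ⟨F, -, hF⟩
      exact hUB F hF
  have hcount := cdx_count hp (cdx_W_pgroup hp hCp S) (cdxSym S) S.tr (fun _ => rfl)
    (fun _ => Iff.rfl) (by omega)
  refine ⟨fun h => ?_, fun h => ?_⟩
  · have := hcount.1 h
    omega
  · have := hcount.2 h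
    omega
end

section
/- Let p be a prime and G a finite p-group such that CD(G) is a quasi-antichain of width w ≥ 3 with G ∈ CD(G), and let a be the positive integer with |G/Z(G)| = p^{2a}. Let t be the number of abelian atoms of CD(G). If t ≥ 3 then t ≥ p + 1. -/
open scoped Pointwise

lemma aux_card_prod {G : Type*} [Group G] [Finite G] (A B : Subgroup G) :
    Nat.card A * Nat.card B =
      Nat.card ((A : Set G) * (B : Set G) : Set G) * Nat.card (A ⊓ B : Subgroup G) := by
  rw [← Nat.card_prod, ← Nat.card_prod]
  have hc : ∀ x : ((A : Set G) * (B : Set G) : Set G), ∃ a ∈ A, ∃ b ∈ B, a * b = x.1 := by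
    rintro ⟨x, hx⟩
    obtain ⟨a, ha, b, hb, h⟩ := Set.mem_mul.1 hx
    exact ⟨a, ha, b, hb, h⟩
  choose f hf g hg hfg using hc
  symm
  refine Nat.card_eq_of_bijective
    (fun q : ((A : Set G) * (B : Set G) : Set G) × (A ⊓ B : Subgroup G) =>
      ((⟨f q.1 * q.2.1, A.mul_mem (hf _) q.2.2.1⟩ : A),
       (⟨q.2.1⁻¹ * g q.1, B.mul_mem (B.inv_mem q.2.2.2) (hg _)⟩ : B))) ⟨?_, ?_⟩
  · rintro ⟨x, d⟩ ⟨x', d'⟩ h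
    simp only [Prod.mk.injEq, Subtype.mk.injEq] at h
    obtain ⟨h1, h2⟩ := h
    have hx : x = x' := by
      apply Subtype.ext
      rw [← hfg x, ← hfg x']
      calc f x * g x = (f x * d.1) * (d.1⁻¹ * g x) := by group
        _ = (f x' * d'.1) * (d'.1⁻¹ * g x') := by rw [h1, h2]
        _ = _ := by group
    subst hx
    have : d = d' := Subtype.ext (mul_left_cancel h1)
    rw [this]
  · rintro ⟨⟨a, ha⟩, ⟨b, hb⟩⟩
    let x : ((A : Set G) * (B : Set G) : Set G) := ⟨a * b, Set.mul_mem_mul ha hb⟩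
    have hx : f x * g x = a * b := hfg x
    have e : (f x)⁻¹ * a = g x * b⁻¹ := by
      rw [eq_mul_inv_iff_mul_eq, mul_assoc, ← hx]; group
    refine ⟨(x, ⟨(f x)⁻¹ * a, A.mul_mem (A.inv_mem (hf x)) ha, ?_⟩), ?_⟩
    · show (f x)⁻¹ * a ∈ B
      rw [e]; exact B.mul_mem (hg x) (B.inv_mem hb)
    · simp only [Prod.mk.injEq, Subtype.mk.injEq]
      refine ⟨by group, ?_⟩
      rw [e]; group

section
variable {G : Type*} [Group G] [Finite G]

lemma aux_le_cent {K : Subgroup G} (hK : ∀ x ∈ K, ∀ y ∈ K, x * y = y * x) :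
    K ≤ Subgroup.centralizer (K : Set G) := by
  intro x hx
  rw [Subgroup.mem_centralizer_iff]
  intro y hy
  exact hK y hy x hx

lemma aux_top_measure : CDmeasure (⊤ : Subgroup G) = Nat.card G * Nat.card (Subgroup.center G) := by
  unfold CDmeasure
  rw [Subgroup.coe_top, Subgroup.centralizer_univ, Subgroup.card_top]

lemma aux_comm_s13 {K : Subgroup G} (h : ∀ x y : K, x * y = y * x) :
    ∀ x ∈ K, ∀ y ∈ K, x * y = y * x := by
  intro x hx y hy
  exact congrArg Subtype.val (h ⟨x, hx⟩ ⟨y, hy⟩)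

lemma aux_card_sq {w : ℕ} (hQA : IsQACD G w) {A : Subgroup G} (hA : A ∈ abelianAtoms G) :
    Nat.card A * Nat.card A = Nat.card G * Nat.card (Subgroup.center G) := by
  obtain ⟨h1, h2, h3, h4⟩ := hA
  have hc := aux_comm_s13 h4
  have hle := aux_le_cent hc
  have hcd : inCD (Subgroup.centralizer (A : Set G)) := by
    intro K
    refine (h1 K).trans ?_
    unfold CDmeasure
    rw [mul_comm]
    apply Nat.mul_le_mul_left
    apply Subgroup.card_le_of_le
    intro x hx
    rw [Subgroup.mem_centralizer_iff]
    intro y hy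
    exact ((Subgroup.mem_centralizer_iff.1 hy) x hx).symm
  have hlt : Subgroup.centralizer (A : Set G) < ⊤ := by
    rw [lt_top_iff_ne_top]
    intro h
    rw [Subgroup.centralizer_eq_top_iff_subset] at h
    exact absurd h (not_le_of_gt h2)
  have he := hQA.2.2.2.1 A _ h1 hcd h2 hle hlt
  have hm : CDmeasure A = CDmeasure (⊤ : Subgroup G) := le_antisymm (hQA.1 _) (h1 _)
  rw [aux_top_measure] at hm
  rw [← hm]
  unfold CDmeasure
  rw [← he]

lemma aux_mem {w : ℕ} (hQA : IsQACD G w) (hne : Subgroup.center G < ⊤) {K : Subgroup G}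
    (hK : ∀ x ∈ K, ∀ y ∈ K, x * y = y * x)
    (hcard : Nat.card G * Nat.card (Subgroup.center G) ≤ Nat.card K * Nat.card K) :
    K ∈ abelianAtoms G := by
  have hcd : inCD K := by
    intro L
    refine (hQA.1 L).trans ?_
    rw [aux_top_measure]
    refine hcard.trans ?_
    exact Nat.mul_le_mul_left _ (Subgroup.card_le_of_le (aux_le_cent hK))
  refine ⟨hcd, lt_of_le_of_ne (hQA.2.2.1 K hcd) ?_, lt_top_iff_ne_top.2 ?_, ?_⟩
  · intro h
    rw [← h] at hcard
    have := Nat.le_of_mul_le_mul_right hcard Nat.card_pos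
    exact hne.ne ((Subgroup.card_eq_iff_eq_top _).1 (le_antisymm (Subgroup.card_le_card_group _) this))
  · rintro rfl
    apply hne.ne
    rw [eq_top_iff]
    intro x _
    rw [Subgroup.mem_center_iff]
    intro g
    exact hK g trivial x trivial
  · rintro ⟨x, hx⟩ ⟨y, hy⟩
    exact Subtype.ext (hK x hx y hy)

lemma aux_pair {w : ℕ} (hQA : IsQACD G w) {A B : Subgroup G} (hA : A ∈ abelianAtoms G)
    (hB : B ∈ abelianAtoms G) (hAB : A ≠ B) :
    A ⊓ B = Subgroup.center G ∧ ∀ g : G, ∃ a ∈ A, ∃ b ∈ B, g = a * b := by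
  have cA := aux_card_sq hQA hA
  have cB := aux_card_sq hQA hB
  have cAB : Nat.card A = Nat.card B := Nat.mul_self_inj.1 (cA.trans cB.symm)
  have hp := aux_card_prod A B
  rw [← cAB, cA] at hp
  have hsub : ((A : Set G) * (B : Set G) : Set G) ⊆
      (Subgroup.centralizer ((A ⊓ B : Subgroup G) : Set G) : Set G) := by
    intro x hx
    obtain ⟨a, ha, b, hb, rfl⟩ := Set.mem_mul.1 hx
    rw [SetLike.mem_coe, Subgroup.mem_centralizer_iff]
    intro d hd
    have h1 := aux_comm_s13 hA.2.2.2 d hd.1 a ha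
    have h2 := aux_comm_s13 hB.2.2.2 d hd.2 b hb
    rw [← mul_assoc, h1, mul_assoc, h2, mul_assoc]
  have hcd : inCD (A ⊓ B) := by
    intro L
    refine (hQA.1 L).trans ?_
    rw [aux_top_measure, hp, mul_comm]
    exact Nat.mul_le_mul_left _ (Nat.card_mono (Set.toFinite _) hsub)
  have hi : A ⊓ B = Subgroup.center G := by
    by_contra hn
    have hlt : Subgroup.center G < A ⊓ B :=
      lt_of_le_of_ne (hQA.2.2.1 _ hcd) (Ne.symm hn)
    have e1 := hQA.2.2.2.1 _ A hcd hA.1 hlt inf_le_left hA.2.2.1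
    have e2 := hQA.2.2.2.1 _ B hcd hB.1 hlt inf_le_right hB.2.2.1
    exact hAB (e1.symm.trans e2)
  refine ⟨hi, ?_⟩
  rw [hi] at hp
  have hc := Nat.eq_of_mul_eq_mul_right Nat.card_pos hp
  have hu : ((A : Set G) * (B : Set G) : Set G) = Set.univ := by
    apply Set.eq_of_subset_of_ncard_le (Set.subset_univ _)
    rw [Set.ncard_univ, hc, Nat.card_coe_set_eq]
  intro g
  have : g ∈ ((A : Set G) * (B : Set G) : Set G) := hu ▸ Set.mem_univ g
  obtain ⟨a, ha, b, hb, h⟩ := Set.mem_mul.1 this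
  exact ⟨a, ha, b, hb, h.symm⟩

lemma aux_normal_s13 {w : ℕ} (hQA : IsQACD G w) {A : Subgroup G} (hA : A ∈ abelianAtoms G) :
    A.Normal := by
  have hne : Subgroup.center G < ⊤ := hA.2.1.trans hA.2.2.1
  have cA := aux_card_sq hQA hA
  have hc := aux_comm_s13 hA.2.2.2
  constructor
  intro n hn g
  set A' := A.map (MulAut.conj g).toMonoidHom with hA'
  have hcard : Nat.card A' = Nat.card A :=
    Subgroup.card_map_of_injective (MulAut.conj g).injective
  have hmem : A' ∈ abelianAtoms G := by
    apply aux_mem hQA hne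
    · rintro _ ⟨x, hx, rfl⟩ _ ⟨y, hy, rfl⟩
      rw [← map_mul, ← map_mul, hc x hx y hy]
    · rw [hcard, cA]
  have hg : g * n * g⁻¹ ∈ A' := ⟨n, hn, rfl⟩
  by_cases h : A = A'
  · rw [h]; exact hg
  · obtain ⟨a, ha, b, ⟨b', hb', rfl⟩, e⟩ := (aux_pair hQA hA hmem h).2 g⁻¹
    have e' : g⁻¹ = a * (g * b' * g⁻¹) := e
    have : g = a⁻¹ * b'⁻¹ := by
      have e2 : (1 : G) = a * g * b' := by
        calc (1 : G) = g⁻¹ * g := by group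
          _ = a * (g * b' * g⁻¹) * g := by rw [← e']
          _ = _ := by group
      calc g = a⁻¹ * (a * g * b') * b'⁻¹ := by group
        _ = _ := by rw [← e2]; group
    have hgA : g ∈ A := this ▸ A.mul_mem (A.inv_mem ha) (A.inv_mem hb')
    exact A.mul_mem (A.mul_mem hgA hn) (A.inv_mem hgA)

lemma aux_commute_pow {z x y : G} (hz : z ∈ Subgroup.center G) (h : x * y = y * x * z) (i : ℕ) :
    x ^ i * y = y * x ^ i * z ^ i := by
  have hzc : ∀ g, g * z = z * g := Subgroup.mem_center_iff.1 hz
  induction i with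
  | zero => simp
  | succ n ih =>
    have hc : z ^ n * x = x * z ^ n := ((show Commute x z from hzc x).pow_right n).symm
    calc x ^ (n+1) * y = x ^ n * (x * y) := by rw [pow_succ, mul_assoc]
      _ = (x ^ n * y) * x * z := by rw [h]; group
      _ = y * x ^ n * (z ^ n * x) * z := by rw [ih]; group
      _ = _ := by rw [hc, pow_succ, pow_succ]; group

/-- generators of the twisted diagonal -/
def auxD (A B C : Subgroup G) (i : ℕ) : Subgroup G :=
  Subgroup.closure {g | ∃ a ∈ A, ∃ b ∈ B, a * b ∈ C ∧ g = a * b ^ i}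

lemma auxD_comm {w : ℕ} (hQA : IsQACD G w) {A B C : Subgroup G} (hA : A ∈ abelianAtoms G)
    (hB : B ∈ abelianAtoms G) (hC : C ∈ abelianAtoms G) (hAB : A ≠ B) (i : ℕ) :
    ∀ x ∈ auxD A B C i, ∀ y ∈ auxD A B C i, x * y = y * x := by
  have nA := aux_normal_s13 hQA hA
  have nB := aux_normal_s13 hQA hB
  have hz : ∀ a ∈ A, ∀ b ∈ B, ∃ z ∈ Subgroup.center G, b * a = a * b * z := by
    intro a ha b hb
    refine ⟨b⁻¹ * a⁻¹ * b * a, ?_, by group⟩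
    rw [← (aux_pair hQA hA hB hAB).1]
    constructor
    · apply A.mul_mem _ ha
      simpa using nA.conj_mem _ (A.inv_mem ha) b⁻¹
    · show b⁻¹ * a⁻¹ * b * a ∈ B
      have : b⁻¹ * a⁻¹ * b * a = b⁻¹ * (a⁻¹ * b * a) := by group
      rw [this]
      apply B.mul_mem (B.inv_mem hb)
      simpa using nB.conj_mem _ hb a⁻¹
  have := Subgroup.isMulCommutative_closure
    (k := {g | ∃ a ∈ A, ∃ b ∈ B, a * b ∈ C ∧ g = a * b ^ i}) ?_
  · intro x hx y hy
    unfold auxD at hx hy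
    exact setLike_mul_comm hx hy
  rintro _ ⟨a, ha, b, hb, hab, rfl⟩ _ ⟨a', ha', b', hb', hab', rfl⟩
  obtain ⟨z, hz1, e⟩ := hz a' ha' b hb
  obtain ⟨z', hz1', e'⟩ := hz a ha b' hb'
  have cc := aux_comm_s13 hC.2.2.2 _ hab _ hab'
  have ca := aux_comm_s13 hA.2.2.2 _ ha _ ha'
  have cb := aux_comm_s13 hB.2.2.2 _ hb _ hb'
  have zc : ∀ g, g * z = z * g := Subgroup.mem_center_iff.1 hz1
  have zc' : ∀ g, g * z' = z' * g := Subgroup.mem_center_iff.1 hz1'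
  have key : ∀ (b b' z z' : G), (∀ g, g * z = z * g) → (∀ g, g * z' = z' * g) →
      b * a' = a' * b * z → b' * a = a * b' * z' → 
      (a * b * (a' * b') = a * a' * (b * b') * z) ∧ 
      (a' * b' * (a * b) = a' * a * (b' * b) * z') := by
    intro b b' z z' zc zc' e e'
    constructor
    · calc _ = a * (b * a') * b' := by group
        _ = a * a' * b * (z * b') := by rw [e]; group
        _ = _ := by rw [← zc]; group
    · calc _ = a' * (b' * a) * b := by group
        _ = a' * a * b' * (z' * b) := by rw [e']; group
        _ = _ := by rw [← zc']; group
  have hzz : z = z' := by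
    obtain ⟨k1, k2⟩ := key b b' z z' zc zc' e e'
    rw [k1, k2, ca, cb] at cc
    exact mul_left_cancel cc
  subst hzz
  have hzi : ∀ g, g * z ^ i = z ^ i * g := fun g => (show Commute g z from zc g).pow_right i
  obtain ⟨k1, k2⟩ := key (b ^ i) (b' ^ i) (z ^ i) (z ^ i) hzi hzi
    (aux_commute_pow hz1 e i) (aux_commute_pow hz1 e' i)
  rw [k1, k2, ca, (show Commute b b' from cb).pow_pow i i]

theorem stmt13_aux {w : ℕ} (hQA : IsQACD G w) (p : ℕ) (hp : p.Prime)
    (hpG : IsPGroup p G) {A B C : Subgroup G} (hA : A ∈ abelianAtoms G)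
    (hB : B ∈ abelianAtoms G) (hC : C ∈ abelianAtoms G) (hAB : A ≠ B) (hAC : A ≠ C) (hBC : B ≠ C) :
    p + 1 ≤ (abelianAtoms G).ncard := by
  have hne : Subgroup.center G < ⊤ := hA.2.1.trans hA.2.2.1
  have cB := aux_card_sq hQA hB
  have hD : ∀ i, ∀ g : G, ∃ d ∈ auxD A B C i, ∃ b ∈ B, g = d * b := by
    intro i g
    obtain ⟨a, ha, b, hb, rfl⟩ := (aux_pair hQA hA hB hAB).2 g
    obtain ⟨c, hc, b', hb', e⟩ := (aux_pair hQA hC hB hBC.symm).2 a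
    refine ⟨a * (b'⁻¹) ^ i, Subgroup.subset_closure ⟨a, ha, b'⁻¹, B.inv_mem hb', ?_, rfl⟩,
      ((b'⁻¹) ^ i)⁻¹ * b, B.mul_mem (B.inv_mem (B.pow_mem (B.inv_mem hb') _)) hb, by group⟩
    rw [e]; simpa using hc
  have hnot : ∀ i, ¬ B ≤ auxD A B C i := by
    intro i hle
    have : auxD A B C i = ⊤ := by
      rw [eq_top_iff]
      intro g _
      obtain ⟨d, hd, b, hb, rfl⟩ := hD i g
      exact Subgroup.mul_mem _ hd (hle hb)
    have hcm := auxD_comm hQA hA hB hC hAB i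
    rw [this] at hcm
    apply hne.ne
    rw [eq_top_iff]
    intro x _
    rw [Subgroup.mem_center_iff]
    intro g
    exact hcm g trivial x trivial
  have hmem : ∀ i, auxD A B C i ∈ abelianAtoms G := by
    intro i
    apply aux_mem hQA hne (auxD_comm hQA hA hB hC hAB i)
    have hpr := aux_card_prod (auxD A B C i) B
    have hu : ((auxD A B C i : Set G) * (B : Set G) : Set G) = Set.univ := by
      rw [Set.eq_univ_iff_forall]
      intro g
      obtain ⟨d, hd, b, hb, rfl⟩ := hD i g
      exact Set.mul_mem_mul hd hb
    rw [hu, Nat.card_coe_set_eq, Set.ncard_univ] at hpr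
    have hz : Subgroup.center G ≤ auxD A B C i ⊓ B := by
      apply le_inf _ hB.2.1.le
      intro z hz
      exact Subgroup.subset_closure ⟨z, hA.2.1.le hz, 1, B.one_mem,
        by simpa using hC.2.1.le hz, by simp⟩
    have h1 : Nat.card B * Nat.card B ≤ Nat.card (auxD A B C i) * Nat.card B := by
      rw [cB, hpr]
      exact Nat.mul_le_mul_left _ (Subgroup.card_le_of_le hz)
    have h2 := Nat.le_of_mul_le_mul_right h1 Nat.card_pos
    rw [← cB]
    exact Nat.mul_le_mul h2 h2
  have hinj : ∀ i j, i < j → j < p → auxD A B C i ≠ auxD A B C j := by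
    intro i j hij hj h
    apply hnot j
    intro b hb
    obtain ⟨a, ha, c, hc, e⟩ := (aux_pair hQA hA hC hAC).2 b
    have hab : a⁻¹ * b ∈ C := by rw [e]; simpa using hc
    have h1 : a⁻¹ * b ^ i ∈ auxD A B C j :=
      h ▸ Subgroup.subset_closure ⟨a⁻¹, A.inv_mem ha, b, hb, hab, rfl⟩
    have h2 : a⁻¹ * b ^ j ∈ auxD A B C j :=
      Subgroup.subset_closure ⟨a⁻¹, A.inv_mem ha, b, hb, hab, rfl⟩
    have h3 : b ^ (j - i) ∈ auxD A B C j := by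
      have := Subgroup.mul_mem _ (Subgroup.inv_mem _ h1) h2
      have e3 : (a⁻¹ * b ^ i)⁻¹ * (a⁻¹ * b ^ j) = b ^ (j - i) := by
        obtain ⟨k, rfl⟩ := Nat.exists_eq_add_of_lt hij
        rw [show i + k + 1 - i = k + 1 by omega, show i + k + 1 = i + (k + 1) by omega, pow_add]
        group
      rwa [e3] at this
    have hcop : p.Coprime (j - i) :=
      (Nat.Prime.coprime_iff_not_dvd hp).2 fun hd => by
        have := Nat.le_of_dvd (by omega) hd
        omega
    have hcop2 : (orderOf b).Coprime (j - i) := by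
      have : Fact p.Prime := ⟨hp⟩
      obtain ⟨n, hn⟩ := IsPGroup.iff_orderOf.1 hpG b
      rw [hn]; exact hcop.pow_left n
    obtain ⟨m, hm⟩ := exists_pow_eq_self_of_coprime hcop2.symm
    rw [← hm]
    exact Subgroup.pow_mem _ h3 m
  let F : Option (Fin p) → Subgroup G := fun o => o.elim B (fun i => auxD A B C i)
  have hF : Function.Injective F := by
    have hB' : ∀ i, B ≠ auxD A B C i := fun i h => hnot i h.le
    rintro (_ | i) (_ | j) h
    · rfl
    · exact absurd h (hB' _)
    · exact absurd h.symm (hB' _)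
    · rcases lt_trichotomy i j with hl | hl | hl
      · exact absurd h (hinj _ _ hl j.2)
      · rw [hl]
      · exact absurd h.symm (hinj _ _ hl i.2)
  have hr : Set.range F ⊆ abelianAtoms G := by
    rintro _ ⟨_ | i, rfl⟩
    · exact hB
    · exact hmem i
  have := Set.ncard_le_ncard hr (Set.toFinite _)
  rwa [← Nat.card_coe_set_eq, Nat.card_range_of_injective hF, Nat.card_eq_fintype_card,
    Fintype.card_option, Fintype.card_fin] at this

end


/-- for a finite `p`-group `G` with `CD(G)` a quasi-antichain of
width `w ≥ 3`, `G ∈ CD(G)`, and `|G/Z(G)| = p^(2a)`: if the number `t` of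
abelian atoms satisfies `t ≥ 3`, then `t ≥ p + 1`. -/
theorem stmt13 {G : Type*} [Group G] [Finite G] (p : ℕ) (hp : p.Prime)
    (hpG : IsPGroup p G) (w : ℕ) (hw : 3 ≤ w) (hQA : IsQACD G w)
    (a : ℕ) (ha : 0 < a)
    (hcard : Nat.card (G ⧸ Subgroup.center G) = p ^ (2 * a))
    (t : ℕ) (ht : t = (abelianAtoms G).ncard) :
    3 ≤ t → p + 1 ≤ t := by
  intro h3
  rw [ht] at h3 ⊢
  obtain ⟨A, B, C, hA, hB, hC, hAB, hAC, hBC⟩ := (Set.two_lt_ncard_iff (Set.toFinite _)).1 h3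
  exact stmt13_aux hQA p hp hpG hA hB hC hAB hAC hBC
end

section
/- For every prime p there exists a finite group P of order p^9 such that CD(P) is a quasi-antichain of width p + 1 with P ∈ CD(P), and the number of abelian atoms of CD(P) is: exactly one (of the three atoms) if p = 2; exactly two (of the p + 1 atoms) if p ≡ 1 (mod 4); and zero if p ≡ 3 (mod 4). -/
/-- `P` has order `p^9`, `CD(P)` is a quasi-antichain of width `p + 1` with
`P ∈ CD(P)`, and the number of abelian atoms is 1 if `p = 2`, 2 if
`p ≡ 1 (mod 4)`, and 0 if `p ≡ 3 (mod 4)`. -/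
def GoodCDwidthPplus1 (P : Type*) [Group P] [Finite P] (p : ℕ) : Prop :=
  Nat.card P = p ^ 9 ∧
  inCD (⊤ : Subgroup P) ∧ inCD (Subgroup.center P) ∧
  (∀ K : Subgroup P, inCD K → Subgroup.center P ≤ K) ∧
  (∀ K K' : Subgroup P, inCD K → inCD K' →
    Subgroup.center P < K → K ≤ K' → K' < ⊤ → K = K') ∧
  {K : Subgroup P | inCD K ∧ Subgroup.center P < K ∧ K < ⊤}.ncard = p + 1 ∧
  (p = 2 → {K : Subgroup P | inCD K ∧ Subgroup.center P < K ∧ K < ⊤ ∧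
    ∀ x y : K, x * y = y * x}.ncard = 1) ∧
  (p % 4 = 1 → {K : Subgroup P | inCD K ∧ Subgroup.center P < K ∧ K < ⊤ ∧
    ∀ x y : K, x * y = y * x}.ncard = 2) ∧
  (p % 4 = 3 → {K : Subgroup P | inCD K ∧ Subgroup.center P < K ∧ K < ⊤ ∧
    ∀ x y : K, x * y = y * x}.ncard = 0)

section CDLinearAlgebra
open Matrix Module

variable {F : Type*} [Field F]

/-- The commutator form `u1 × v1 + u2 × v2`. -/
def cdB (u : (Fin 3 → F) × (Fin 3 → F)) : ((Fin 3 → F) × (Fin 3 → F)) →ₗ[F] (Fin 3 → F) :=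
  (crossProduct u.1).coprod (crossProduct u.2)

lemma cdB_apply (u v : (Fin 3 → F) × (Fin 3 → F)) :
    cdB u v = crossProduct u.1 v.1 + crossProduct u.2 v.2 := rfl

lemma cdB_anti (u v : (Fin 3 → F) × (Fin 3 → F)) : cdB u v = - cdB v u := by
  rw [cdB_apply, cdB_apply, ← cross_anticomm v.1, ← cross_anticomm v.2]; abel

lemma cross_par {w x : Fin 3 → F} (hw : w ≠ 0) (h : crossProduct w x = 0) : ∃ c : F, x = c • w := by
  by_contra hc
  push Not at hc
  exact crossProduct_ne_zero_iff_linearIndependent.2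
    ((LinearIndependent.pair_iff' hw).2 fun a ha => hc a ha.symm) h

lemma cross_zero_comm {w x : Fin 3 → F} (h : crossProduct w x = 0) : crossProduct x w = 0 := by
  rw [← cross_anticomm, h, neg_zero]

lemma cross_all {z : Fin 3 → F} (h : ∀ v, crossProduct z v = 0) : z = 0 := by
  apply dotProduct_eq_zero
  intro w
  by_contra hne
  have h0 := h ![1, 0, 0]
  have h1 := h ![0, 1, 0]
  simp [cross_apply] at h0 h1
  apply hne
  simp [dotProduct, Fin.sum_univ_three, h0, h1]

lemma exists_cross_ne {z : Fin 3 → F} (h : z ≠ 0) : ∃ v, crossProduct z v ≠ 0 := by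
  by_contra hc
  push Not at hc
  exact h (cross_all hc)

lemma rank_one {u : (Fin 3 → F) × (Fin 3 → F)} (hu : u ≠ 0) (h : crossProduct u.1 u.2 = 0) :
    ∃ (w : Fin 3 → F) (a b : F), w ≠ 0 ∧ u = (a • w, b • w) ∧ (a ≠ 0 ∨ b ≠ 0) := by
  by_cases h1 : u.1 = 0
  · refine ⟨u.2, 0, 1, ?_, ?_, by simp⟩
    · intro h2; exact hu (Prod.ext h1 h2)
    · ext <;> simp [h1]
  · obtain ⟨c, hc⟩ := cross_par h1 h
    exact ⟨u.1, 1, c, h1, by ext <;> simp [hc], by simp⟩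

lemma finM : finrank F ((Fin 3 → F) × (Fin 3 → F)) = 6 := by simp

lemma ker_rank_two {u : (Fin 3 → F) × (Fin 3 → F)} (h : crossProduct u.1 u.2 ≠ 0) :
    finrank F (LinearMap.ker (cdB u)) ≤ 3 := by
  have hr : LinearMap.range (cdB u) = ⊤ := by
    by_contra hne
    obtain ⟨f, hf, hle⟩ := Submodule.exists_le_ker_of_lt_top _ (lt_top_iff_ne_top.2 hne)
    obtain ⟨z, rfl⟩ := (dotProductEquiv F (Fin 3)).surjective f
    have hz : z ≠ 0 := by rintro rfl; simp at hf
    have key : ∀ v, z ⬝ᵥ cdB u v = 0 := fun v => by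
      have := hle (LinearMap.mem_range_self (cdB u) v)
      simpa using this
    have h1 : crossProduct z u.1 = 0 := by
      apply dotProduct_eq_zero
      intro v
      have := key (v, 0)
      rw [cdB_apply, map_zero, add_zero] at this
      rw [dotProduct_comm, triple_product_permutation]; exact this
    have h2 : crossProduct z u.2 = 0 := by
      apply dotProduct_eq_zero
      intro v
      have := key (0, v)
      rw [cdB_apply, map_zero, zero_add] at this
      rw [dotProduct_comm, triple_product_permutation]; exact this
    obtain ⟨c, hc⟩ := cross_par hz h1
    obtain ⟨d, hd⟩ := cross_par hz h2
    apply h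
    rw [hc, hd]; simp
  have := LinearMap.finrank_range_add_finrank_ker (cdB u)
  rw [hr, finM, finrank_top] at this
  simp at this
  omega

lemma range_cross {z : Fin 3 → F} (h : z ≠ 0) : 2 ≤ finrank F (LinearMap.range (crossProduct z)) := by
  have h1 : LinearMap.ker (crossProduct z) ≤ F ∙ z := by
    intro x hx
    obtain ⟨c, rfl⟩ := cross_par h hx
    exact Submodule.smul_mem _ _ (Submodule.mem_span_singleton_self z)
  have h2 := Submodule.finrank_mono h1
  rw [finrank_span_singleton h] at h2
  have := LinearMap.finrank_range_add_finrank_ker (crossProduct z)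
  simp only [finrank_fintype_fun_eq_card, Fintype.card_fin] at this
  omega

lemma ker_ne_zero {u : (Fin 3 → F) × (Fin 3 → F)} (h : u ≠ 0) :
    finrank F (LinearMap.ker (cdB u)) ≤ 4 := by
  have h2 : 2 ≤ finrank F (LinearMap.range (cdB u)) := by
    by_cases h1 : u.1 = 0
    · have h2 : u.2 ≠ 0 := fun h2 => h (Prod.ext h1 h2)
      refine (range_cross h2).trans (Submodule.finrank_mono ?_)
      rintro _ ⟨v, rfl⟩
      exact ⟨(0, v), by simp [cdB_apply]⟩
    · refine (range_cross h1).trans (Submodule.finrank_mono ?_)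
      rintro _ ⟨v, rfl⟩
      exact ⟨(v, 0), by simp [cdB_apply]⟩
  have := LinearMap.finrank_range_add_finrank_ker (cdB u)
  rw [finM] at this
  omega

lemma perp_ker {u x : (Fin 3 → F) × (Fin 3 → F)} (h : u ≠ 0)
    (hx : ∀ v, cdB u v = 0 → cdB x v = 0) : x ∈ F ∙ u := by
  rw [Submodule.mem_span_singleton]
  by_cases hn : crossProduct u.1 u.2 = 0
  · obtain ⟨w, a, b, hw, rfl, hab⟩ := rank_one h hn
    have h1 := hx (w, 0) (by simp [cdB_apply])
    have h2 := hx (0, w) (by simp [cdB_apply])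
    simp [cdB_apply] at h1 h2
    obtain ⟨c, hc⟩ := cross_par hw (cross_zero_comm h1)
    obtain ⟨d, hd⟩ := cross_par hw (cross_zero_comm h2)
    obtain ⟨x1, x2⟩ := x
    simp only at hc hd
    subst hc hd
    obtain ⟨v, hv⟩ := exists_cross_ne hw
    have h3 := hx (b • v, -(a • v)) (by
      simp only [cdB_apply, map_smul, map_neg, LinearMap.smul_apply, smul_smul]
      rw [mul_comm a b]; simp)
    have h4 : (b * c - a * d) • crossProduct w v = 0 := by
      rw [← h3]
      simp only [cdB_apply, map_smul, map_neg, LinearMap.smul_apply, smul_smul]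
      module
    have h5 : b * c = a * d := by
      rcases smul_eq_zero.1 h4 with h | h
      · exact sub_eq_zero.1 h
      · exact absurd h hv
    rcases hab with ha | hb
    · refine ⟨c / a, ?_⟩
      have : c / a * b = d := by field_simp; linear_combination h5
      ext1
      · simp [smul_smul, ha]
      · simp [smul_smul, this]
    · refine ⟨d / b, ?_⟩
      have : d / b * a = c := by field_simp; linear_combination -h5
      ext1
      · simp [smul_smul, this]
      · simp [smul_smul, hb]
  · have hu1 : u.1 ≠ 0 := by rintro h; simp [h] at hn
    have hu2 : u.2 ≠ 0 := by rintro h; simp [h] at hn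
    have h1 := hx (u.1, 0) (by simp [cdB_apply])
    have h2 := hx (0, u.2) (by simp [cdB_apply])
    have h3 := hx (u.2, u.1) (by simp [cdB_apply, cross_anticomm'])
    simp [cdB_apply] at h1 h2 h3
    obtain ⟨c, hc⟩ := cross_par hu1 (cross_zero_comm h1)
    obtain ⟨d, hd⟩ := cross_par hu2 (cross_zero_comm h2)
    rw [hc, hd] at h3
    have h4 : (c - d) • crossProduct u.1 u.2 = 0 := by
      rw [← h3]
      simp only [map_smul, LinearMap.smul_apply]
      rw [← cross_anticomm u.1 u.2]
      module
    rcases smul_eq_zero.1 h4 with h | h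
    · have := sub_eq_zero.1 h
      subst this
      exact ⟨c, Prod.ext hc.symm hd.symm⟩
    · exact absurd h hn

/-- The atoms: `none` is `v1 = 0`, `some t` is `v2 = t v1`. -/
def cdA : Option F → Submodule F ((Fin 3 → F) × (Fin 3 → F))
  | none => LinearMap.ker (LinearMap.fst F (Fin 3 → F) (Fin 3 → F))
  | some t => LinearMap.ker (LinearMap.snd F (Fin 3 → F) (Fin 3 → F) -
      t • LinearMap.fst F (Fin 3 → F) (Fin 3 → F))

lemma mem_cdA_none {v : (Fin 3 → F) × (Fin 3 → F)} : v ∈ cdA (none : Option F) ↔ v.1 = 0 := Iff.rfl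

lemma mem_cdA_some {t : F} {v : (Fin 3 → F) × (Fin 3 → F)} : v ∈ cdA (some t) ↔ v.2 = t • v.1 := by
  simp [cdA, sub_eq_zero]

lemma finrank_cdA (t : Option F) : finrank F (cdA t) = 3 := by
  rcases t with _ | t
  · have := LinearMap.finrank_range_add_finrank_ker (LinearMap.fst F (Fin 3 → F) (Fin 3 → F))
    rw [LinearMap.range_eq_top.2 LinearMap.fst_surjective, finM, finrank_top] at this
    simp only [finrank_fintype_fun_eq_card, Fintype.card_fin] at this
    exact Nat.add_left_cancel (this.trans (rfl : 6 = 3 + 3))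
  · have := LinearMap.finrank_range_add_finrank_ker (LinearMap.snd F (Fin 3 → F) (Fin 3 → F) -
      t • LinearMap.fst F (Fin 3 → F) (Fin 3 → F))
    rw [LinearMap.range_eq_top.2, finM, finrank_top] at this
    · simp only [finrank_fintype_fun_eq_card, Fintype.card_fin] at this
      exact Nat.add_left_cancel (this.trans (rfl : 6 = 3 + 3))
    · intro y
      exact ⟨(0, y), by simp⟩

lemma all_rank_one {U : Submodule F ((Fin 3 → F) × (Fin 3 → F))} (hU : finrank F U = 3)
    (h : ∀ u ∈ U, crossProduct u.1 u.2 = 0) : ∃ t, U = cdA t := by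
  have hne : U ≠ ⊥ := by rintro rfl; simp at hU
  obtain ⟨u, huU, hu⟩ := Submodule.exists_mem_ne_zero_of_ne_bot hne
  obtain ⟨w, a, b, hw, rfl, hab⟩ := rank_one hu (h u huU)
  have pol : ∀ u ∈ U, ∀ v ∈ U, crossProduct u.1 v.2 - crossProduct u.2 v.1 = 0 := by
    intro u hu v hv
    have := h _ (U.add_mem hu hv)
    simp only [Prod.fst_add, Prod.snd_add, map_add, LinearMap.add_apply, h u hu, h v hv] at this
    rw [← cross_anticomm u.2 v.1] at this
    rw [← this]; abel
  have key : ∀ v ∈ U, crossProduct w (a • v.2 - b • v.1) = 0 := by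
    intro v hv
    rw [← pol _ huU v hv]; simp
  by_cases hall : ∀ v ∈ U, a • v.2 - b • v.1 = 0
  · by_cases ha : a = 0
    · have hb : b ≠ 0 := by rcases hab with h | h; exacts [absurd ha h, h]
      refine ⟨none, Submodule.eq_of_le_of_finrank_le ?_ (by rw [finrank_cdA, hU])⟩
      intro v hv
      have := hall v hv
      rw [mem_cdA_none]
      simpa [ha, hb] using this
    · refine ⟨some (b / a), Submodule.eq_of_le_of_finrank_le ?_ (by rw [finrank_cdA, hU])⟩
      intro v hv
      have := sub_eq_zero.1 (hall v hv)
      rw [mem_cdA_some, div_eq_inv_mul, mul_smul, ← this, smul_smul, inv_mul_cancel₀ ha, one_smul]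
  · exfalso
    push Not at hall
    obtain ⟨v, hv, hvne⟩ := hall
    obtain ⟨c, hc⟩ := cross_par hw (key v hv)
    have hc0 : c ≠ 0 := by rintro rfl; simp at hc; exact hvne hc
    have hv1 : crossProduct w v.1 = 0 := by
      have : crossProduct (c • w) v.1 = 0 := by
        rw [← hc]; simp [cross_zero_comm (h v hv)]
      simpa [hc0] using this
    have hv2 : crossProduct w v.2 = 0 := by
      have : crossProduct (c • w) v.2 = 0 := by
        rw [← hc]; simp [h v hv]
      simpa [hc0] using this
    obtain ⟨d, hd⟩ := cross_par hw hv1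
    obtain ⟨e, he⟩ := cross_par hw hv2
    have hdet : a * e - b * d ≠ 0 := by
      intro h0
      apply hvne
      rw [hd, he, smul_smul, smul_smul, ← sub_smul, h0, zero_smul]
    have key2 : ∀ x ∈ U, d • crossProduct w x.2 - e • crossProduct w x.1 = 0 := by
      intro x hx
      rw [← pol v hv x hx, hd, he]; simp
    have key1 : ∀ x ∈ U, a • crossProduct w x.2 - b • crossProduct w x.1 = 0 := by
      intro x hx
      rw [← key x hx]; simp
    have hle : U ≤ LinearMap.range ((LinearMap.toSpanSingleton F (Fin 3 → F) w).prodMap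
        (LinearMap.toSpanSingleton F (Fin 3 → F) w)) := by
      intro x hx
      have e1 : (a * e - b * d) • crossProduct w x.1 = 0 := by
        have : (a * e - b * d) • crossProduct w x.1 =
          d • (a • crossProduct w x.2 - b • crossProduct w x.1) -
          a • (d • crossProduct w x.2 - e • crossProduct w x.1) := by module
        rw [this, key1 x hx, key2 x hx]; simp
      have e2 : (a * e - b * d) • crossProduct w x.2 = 0 := by
        have : (a * e - b * d) • crossProduct w x.2 =
          e • (a • crossProduct w x.2 - b • crossProduct w x.1) -
          b • (d • crossProduct w x.2 - e • crossProduct w x.1) := by module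
        rw [this, key1 x hx, key2 x hx]; simp
      obtain ⟨r, hr⟩ := cross_par hw ((smul_eq_zero.1 e1).resolve_left hdet)
      obtain ⟨s, hs⟩ := cross_par hw ((smul_eq_zero.1 e2).resolve_left hdet)
      exact ⟨(r, s), by ext1 <;> simp [hr, hs]⟩
    have h1 := Submodule.finrank_mono hle
    have h2 := LinearMap.finrank_range_le ((LinearMap.toSpanSingleton F (Fin 3 → F) w).prodMap
        (LinearMap.toSpanSingleton F (Fin 3 → F) w))
    simp only [finrank_prod, finrank_self] at h2
    omega

/-- Orthogonal complement. -/
def cdPerp (U : Submodule F ((Fin 3 → F) × (Fin 3 → F))) :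
    Submodule F ((Fin 3 → F) × (Fin 3 → F)) where
  carrier := {v | ∀ u ∈ U, cdB u v = 0}
  zero_mem' := fun u _ => map_zero _
  add_mem' := fun {x y} hx hy u hu => by rw [map_add, hx u hu, hy u hu, add_zero]
  smul_mem' := fun c x hx u hu => by rw [map_smul, hx u hu, smul_zero]

lemma mem_cdPerp {U : Submodule F ((Fin 3 → F) × (Fin 3 → F))} {v} :
    v ∈ cdPerp U ↔ ∀ u ∈ U, cdB u v = 0 := Iff.rfl

lemma perp_classify {U T : Submodule F ((Fin 3 → F) × (Fin 3 → F))}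
    (hperp : ∀ u ∈ U, ∀ t ∈ T, cdB u t = 0) (h6 : 6 ≤ finrank F U + finrank F T) :
    finrank F U + finrank F T = 6 ∧ (U = ⊥ ∨ U = ⊤ ∨ ∃ t, U = cdA t) := by
  have hU6 := Submodule.finrank_le U
  have hT6 := Submodule.finrank_le T
  rw [finM] at hU6 hT6
  by_cases hU : U = ⊥
  · refine ⟨?_, Or.inl hU⟩
    rw [hU, finrank_bot] at h6 ⊢
    omega
  by_cases hT : T = ⊥
  · rw [hT, finrank_bot] at h6 ⊢
    refine ⟨by omega, Or.inr (Or.inl ?_)⟩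
    apply Submodule.eq_top_of_finrank_eq
    rw [finM]; omega
  obtain ⟨u, huU, hu⟩ := Submodule.exists_mem_ne_zero_of_ne_bot hU
  obtain ⟨t, htT, ht⟩ := Submodule.exists_mem_ne_zero_of_ne_bot hT
  have hTk : ∀ u ∈ U, T ≤ LinearMap.ker (cdB u) := fun u hu t ht => hperp u hu t ht
  have hUk : ∀ t ∈ T, U ≤ LinearMap.ker (cdB t) := fun t ht u hu => by
    rw [LinearMap.mem_ker, cdB_anti, hperp u hu t ht, neg_zero]
  have hT4 := (Submodule.finrank_mono (hTk u huU)).trans (ker_ne_zero hu)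
  have hU4 := (Submodule.finrank_mono (hUk t htT)).trans (ker_ne_zero ht)
  have noT : ∀ u ∈ U, u ≠ 0 → finrank F (LinearMap.ker (cdB u)) ≤ finrank F T → finrank F U ≤ 1 := by
    intro u huU hu hle
    have heq := Submodule.eq_of_le_of_finrank_le (hTk u huU) hle
    rw [← finrank_span_singleton (K := F) hu]
    apply Submodule.finrank_mono
    intro x hx
    apply perp_ker hu
    intro v hv
    exact hperp x hx v (heq ▸ hv)
  have noU : ∀ t ∈ T, t ≠ 0 → finrank F (LinearMap.ker (cdB t)) ≤ finrank F U → finrank F T ≤ 1 := by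
    intro u huU hu hle
    have heq := Submodule.eq_of_le_of_finrank_le (hUk u huU) hle
    rw [← finrank_span_singleton (K := F) hu]
    apply Submodule.finrank_mono
    intro x hx
    apply perp_ker hu
    intro v hv
    rw [cdB_anti, hperp v (heq ▸ hv) x hx, neg_zero]
  have hT3 : finrank F T ≤ 3 := by
    by_contra hc
    have := noT u huU hu ((ker_ne_zero hu).trans (by omega))
    omega
  have hU3 : finrank F U ≤ 3 := by
    by_contra hc
    have := noU t htT ht ((ker_ne_zero ht).trans (by omega))
    omega
  refine ⟨by omega, Or.inr (Or.inr (all_rank_one (by omega) ?_))⟩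
  intro x hx
  by_contra hc
  have hx0 : x ≠ 0 := by rintro rfl; simp at hc
  have := noT x hx hx0 ((ker_rank_two hc).trans (by omega))
  omega

lemma perp_top : cdPerp (⊤ : Submodule F ((Fin 3 → F) × (Fin 3 → F))) = ⊥ := by
  rw [eq_bot_iff]
  intro v hv
  rw [Submodule.mem_bot]
  ext1
  · apply cross_all
    intro x
    apply cross_zero_comm
    simpa [cdB_apply] using hv (x, 0) trivial
  · apply cross_all
    intro x
    apply cross_zero_comm
    simpa [cdB_apply] using hv (0, x) trivial

lemma perp_bot : cdPerp (⊥ : Submodule F ((Fin 3 → F) × (Fin 3 → F))) = ⊤ := by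
  rw [eq_top_iff]
  intro v _ u hu
  rw [Submodule.mem_bot] at hu
  subst hu
  simp [cdB_apply]

lemma perp_cdA (t : Option F) : ∃ s, cdA s ≤ cdPerp (cdA t) := by
  rcases t with _ | t
  · refine ⟨some 0, fun v hv u hu => ?_⟩
    rw [mem_cdA_some] at hv
    rw [mem_cdA_none] at hu
    simp [cdB_apply, hv, hu]
  · by_cases ht : t = 0
    · refine ⟨none, fun v hv u hu => ?_⟩
      rw [mem_cdA_some] at hu
      rw [mem_cdA_none] at hv
      simp [cdB_apply, hv, hu, ht]
    · refine ⟨some (-t⁻¹), fun v hv u hu => ?_⟩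
      rw [mem_cdA_some] at hu hv
      simp [cdB_apply, hv, hu, ht]

lemma cdA_inj : Function.Injective (cdA : Option F → _) := by
  have h : ∀ t : F, cdA (some t) ≠ cdA none := by
    intro t h
    have : ((![1,0,0], t • ![1,0,0]) : (Fin 3 → F) × (Fin 3 → F)) ∈ cdA (some t) := by
      rw [mem_cdA_some]
    rw [h, mem_cdA_none] at this
    simpa using congrFun this 0
  rintro (_ | t) (_ | s) hts
  · rfl
  · exact absurd hts.symm (h s)
  · exact absurd hts (h t)
  · have : ((![1,0,0], t • ![1,0,0]) : (Fin 3 → F) × (Fin 3 → F)) ∈ cdA (some t) := by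
      rw [mem_cdA_some]
    rw [hts, mem_cdA_some] at this
    have := congrFun this 0
    simp at this
    rw [this]

lemma cdA_isotropic (t : Option F) :
    (∀ u ∈ cdA t, ∀ v ∈ cdA t, cdB u v = 0) ↔ ∃ s : F, t = some s ∧ s ^ 2 = -1 := by
  rcases t with _ | t
  · simp only [reduceCtorEq, false_and, exists_false, iff_false]
    intro h
    have := h (0, ![1,0,0]) (by rw [mem_cdA_none]) (0, ![0,1,0]) (by rw [mem_cdA_none])
    have := congrFun this 2
    simp [cdB_apply, cross_apply] at this
  · constructor
    · intro h
      refine ⟨t, rfl, ?_⟩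
      have := h (![1,0,0], t • ![1,0,0]) (by rw [mem_cdA_some])
        (![0,1,0], t • ![0,1,0]) (by rw [mem_cdA_some])
      have := congrFun this 2
      simp [cdB_apply, cross_apply] at this
      linear_combination this
    · rintro ⟨s, hs, h⟩ u hu v hv
      obtain rfl := Option.some_injective _ hs
      rw [mem_cdA_some] at hu hv
      have : cdB u v = (1 + t ^ 2) • crossProduct u.1 v.1 := by
        rw [cdB_apply, hu, hv]
        simp only [map_smul, LinearMap.smul_apply]
        module
      rw [this, h]; simp

end CDLinearAlgebra

section CDGroup
open Module

/-- Half of the cross product. -/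
def cdHalf {F : Type*} [Field F] (x y : Fin 3 → F) : Fin 3 → F :=
  ![x 1 * y 2, x 2 * y 0, x 0 * y 1]

/-- The cocycle. -/
def cdBeta {F : Type*} [Field F] (u v : (Fin 3 → F) × (Fin 3 → F)) : Fin 3 → F :=
  cdHalf u.1 v.1 + cdHalf u.2 v.2

/-- The underlying type of the group. -/
@[ext] structure CDP (F : Type) where
  m : (Fin 3 → F) × (Fin 3 → F)
  z : Fin 3 → F

variable {F : Type} [Field F]

lemma cdBeta_add_left (u v w : (Fin 3 → F) × (Fin 3 → F)) :
    cdBeta (u + v) w = cdBeta u w + cdBeta v w := by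
  ext i; fin_cases i <;> simp [cdBeta, cdHalf] <;> ring

lemma cdBeta_add_right (u v w : (Fin 3 → F) × (Fin 3 → F)) :
    cdBeta u (v + w) = cdBeta u v + cdBeta u w := by
  ext i; fin_cases i <;> simp [cdBeta, cdHalf] <;> ring

lemma cdBeta_neg_left (u v : (Fin 3 → F) × (Fin 3 → F)) :
    cdBeta (-u) v = - cdBeta u v := by
  ext i; fin_cases i <;> simp [cdBeta, cdHalf] <;> ring

lemma cdBeta_zero_left (v : (Fin 3 → F) × (Fin 3 → F)) : cdBeta 0 v = 0 := by
  ext i; fin_cases i <;> simp [cdBeta, cdHalf]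

lemma cdBeta_zero_right (v : (Fin 3 → F) × (Fin 3 → F)) : cdBeta v 0 = 0 := by
  ext i; fin_cases i <;> simp [cdBeta, cdHalf]

lemma cdBeta_sub (u v : (Fin 3 → F) × (Fin 3 → F)) :
    cdBeta u v - cdBeta v u = cdB u v := by
  ext i; fin_cases i <;> simp [cdBeta, cdHalf, cdB_apply, cross_apply] <;> ring

instance : Group (CDP F) where
  mul x y := ⟨x.m + y.m, x.z + y.z + cdBeta x.m y.m⟩
  one := ⟨0, 0⟩
  inv x := ⟨-x.m, -x.z + cdBeta x.m x.m⟩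
  mul_assoc x y w := by
    change CDP.mk _ _ = CDP.mk _ _
    congr 1
    · exact add_assoc _ _ _
    · change x.z + y.z + cdBeta x.m y.m + w.z + cdBeta (x.m + y.m) w.m =
        x.z + (y.z + w.z + cdBeta y.m w.m) + cdBeta x.m (y.m + w.m)
      rw [cdBeta_add_left, cdBeta_add_right]; abel
  one_mul x := by
    change CDP.mk (0 + x.m) (0 + x.z + cdBeta 0 x.m) = x
    rw [cdBeta_zero_left]; simp
  mul_one x := by
    change CDP.mk (x.m + 0) (x.z + 0 + cdBeta x.m 0) = x
    rw [cdBeta_zero_right]; simp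
  inv_mul_cancel x := by
    change CDP.mk (-x.m + x.m) (-x.z + cdBeta x.m x.m + x.z + cdBeta (-x.m) x.m) = CDP.mk 0 0
    rw [cdBeta_neg_left]; congr 1
    · simp
    · abel

lemma CDP.mul_m (x y : CDP F) : (x * y).m = x.m + y.m := rfl
lemma CDP.mul_z (x y : CDP F) : (x * y).z = x.z + y.z + cdBeta x.m y.m := rfl
lemma CDP.inv_m (x : CDP F) : (x⁻¹).m = -x.m := rfl
lemma CDP.one_m : (1 : CDP F).m = 0 := rfl

lemma CDP.comm_iff (x y : CDP F) : x * y = y * x ↔ cdB x.m y.m = 0 := by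
  rw [← cdBeta_sub, sub_eq_zero]
  constructor
  · intro h
    have := congrArg CDP.z h
    rw [CDP.mul_z, CDP.mul_z, add_comm x.z] at this
    exact add_left_cancel this
  · intro h
    ext1
    · rw [CDP.mul_m, CDP.mul_m, add_comm]
    · rw [CDP.mul_z, CDP.mul_z, add_comm x.z, h]

/-- The equivalence with a product. -/
def CDP.equiv : CDP F ≃ ((Fin 3 → F) × (Fin 3 → F)) × (Fin 3 → F) where
  toFun x := (x.m, x.z)
  invFun x := ⟨x.1, x.2⟩
  left_inv _ := rfl
  right_inv _ := rfl

instance [Finite F] : Finite (CDP F) := Finite.of_equiv _ CDP.equiv.symm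

/-- The full preimage of a subspace. -/
def cdFull (U : Submodule F ((Fin 3 → F) × (Fin 3 → F))) : Subgroup (CDP F) where
  carrier := {x | x.m ∈ U}
  mul_mem' := fun {x y} hx hy => U.add_mem hx hy
  one_mem' := U.zero_mem
  inv_mem' := fun {x} hx => U.neg_mem hx

lemma mem_cdFull {U : Submodule F ((Fin 3 → F) × (Fin 3 → F))} {x : CDP F} :
    x ∈ cdFull U ↔ x.m ∈ U := Iff.rfl

lemma cdFull_le {U T : Submodule F ((Fin 3 → F) × (Fin 3 → F))} :
    cdFull U ≤ cdFull T ↔ U ≤ T :=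
  ⟨fun h x hx => h (x := ⟨x, 0⟩) hx, fun h _ hx => h hx⟩

lemma cdFull_inj : Function.Injective (cdFull (F := F)) := fun _ _ h =>
  le_antisymm (cdFull_le.1 h.le) (cdFull_le.1 h.ge)

lemma cdFull_top : cdFull (⊤ : Submodule F ((Fin 3 → F) × (Fin 3 → F))) = ⊤ := by
  rw [eq_top_iff]; intro x _; trivial

lemma card_cdFull [Finite F] (U : Submodule F ((Fin 3 → F) × (Fin 3 → F))) :
    Nat.card (cdFull U) = Nat.card F ^ (finrank F U + 3) := by
  have e : cdFull U ≃ U × (Fin 3 → F) :=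
    { toFun := fun x => (⟨x.1.m, x.2⟩, x.1.z)
      invFun := fun x => ⟨⟨x.1.1, x.2⟩, x.1.2⟩
      left_inv := fun _ => rfl
      right_inv := fun _ => rfl }
  rw [Nat.card_congr e, Nat.card_prod, natCard_eq_pow_finrank (K := F) (V := U), Nat.card_fun,
    Nat.card_fin, pow_add]

lemma centralizer_cdFull (U : Submodule F ((Fin 3 → F) × (Fin 3 → F))) :
    Subgroup.centralizer (cdFull U : Set (CDP F)) = cdFull (cdPerp U) := by
  ext x
  rw [Subgroup.mem_centralizer_iff, mem_cdFull, mem_cdPerp]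
  constructor
  · intro h u hu
    exact (CDP.comm_iff ⟨u, 0⟩ x).1 (h ⟨u, 0⟩ hu)
  · intro h y hy
    exact (CDP.comm_iff y x).2 (h _ hy)

lemma measure_cdFull [Finite F] (U : Submodule F ((Fin 3 → F) × (Fin 3 → F))) :
    CDmeasure (cdFull U) = Nat.card F ^ (finrank F U + finrank F (cdPerp U) + 6) := by
  rw [CDmeasure, centralizer_cdFull, card_cdFull, card_cdFull, ← pow_add]
  congr 1; omega

lemma center_eq : Subgroup.center (CDP F) = cdFull ⊥ := by
  rw [← perp_top, ← centralizer_cdFull, cdFull_top, Subgroup.coe_top, Subgroup.centralizer_univ]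

lemma finrank_sum_le (U : Submodule F ((Fin 3 → F) × (Fin 3 → F))) :
    finrank F U + finrank F (cdPerp U) ≤ 6 := by
  by_contra hc
  have := (perp_classify (U := U) (T := cdPerp U) (fun u hu t ht => ht u hu) (by omega)).1
  omega

lemma finrank_sum_eq (U : Submodule F ((Fin 3 → F) × (Fin 3 → F))) :
    finrank F U + finrank F (cdPerp U) = 6 ↔ (U = ⊥ ∨ U = ⊤ ∨ ∃ t, U = cdA t) := by
  constructor
  · intro h
    exact (perp_classify (U := U) (T := cdPerp U) (fun u hu t ht => ht u hu) h.ge).2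
  · rintro (rfl | rfl | ⟨t, rfl⟩)
    · rw [perp_bot, finrank_bot, finrank_top, finM]
    · rw [perp_top, finrank_bot, finrank_top, finM]
    · refine le_antisymm (finrank_sum_le _) ?_
      obtain ⟨s, hs⟩ := perp_cdA t
      have := Submodule.finrank_mono hs
      rw [finrank_cdA] at this ⊢
      omega

variable {p : ℕ} [hp : Fact p.Prime]

/-- The image of a subgroup in the vector space. -/
def cdProj (H : Subgroup (CDP (ZMod p))) :
    Submodule (ZMod p) ((Fin 3 → ZMod p) × (Fin 3 → ZMod p)) :=
  AddSubgroup.toZModSubmodule p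
    { carrier := {u | ∃ x ∈ H, x.m = u}
      add_mem' := by
        rintro _ _ ⟨x, hx, rfl⟩ ⟨y, hy, rfl⟩
        exact ⟨x * y, H.mul_mem hx hy, rfl⟩
      zero_mem' := ⟨1, H.one_mem, rfl⟩
      neg_mem' := by
        rintro _ ⟨x, hx, rfl⟩
        exact ⟨x⁻¹, H.inv_mem hx, rfl⟩ }

lemma mem_cdProj {H : Subgroup (CDP (ZMod p))} {u} : u ∈ cdProj H ↔ ∃ x ∈ H, x.m = u := Iff.rfl

lemma le_cdFull (H : Subgroup (CDP (ZMod p))) : H ≤ cdFull (cdProj H) := fun x hx =>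
  mem_cdFull.2 (mem_cdProj.2 ⟨x, hx, rfl⟩)

lemma centralizer_eq (H : Subgroup (CDP (ZMod p))) :
    Subgroup.centralizer (H : Set (CDP (ZMod p))) =
      Subgroup.centralizer (cdFull (cdProj H) : Set (CDP (ZMod p))) := by
  apply le_antisymm
  · intro x hx
    rw [Subgroup.mem_centralizer_iff] at hx ⊢
    intro y hy
    obtain ⟨w, hw, hwy⟩ := mem_cdProj.1 (mem_cdFull.1 hy)
    rw [CDP.comm_iff, ← hwy, ← CDP.comm_iff]
    exact hx w hw
  · exact Subgroup.centralizer_le (le_cdFull H)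

lemma measure_le_full (H : Subgroup (CDP (ZMod p))) :
    CDmeasure H ≤ CDmeasure (cdFull (cdProj H)) := by
  rw [CDmeasure, CDmeasure, centralizer_eq]
  exact Nat.mul_le_mul_right _ (Subgroup.card_le_of_le (le_cdFull H))

lemma measure_le (H : Subgroup (CDP (ZMod p))) : CDmeasure H ≤ p ^ 12 := by
  refine (measure_le_full H).trans ?_
  rw [measure_cdFull, Nat.card_zmod]
  exact Nat.pow_le_pow_right hp.out.pos (by have := finrank_sum_le (cdProj H); omega)

lemma measure_full_eq (U : Submodule (ZMod p) ((Fin 3 → ZMod p) × (Fin 3 → ZMod p))) :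
    CDmeasure (cdFull U) = p ^ 12 ↔ (U = ⊥ ∨ U = ⊤ ∨ ∃ t, U = cdA t) := by
  rw [measure_cdFull, Nat.card_zmod, ← finrank_sum_eq, Nat.pow_right_inj hp.out.two_le]
  omega

lemma inCD_iff (H : Subgroup (CDP (ZMod p))) : inCD H ↔ CDmeasure H = p ^ 12 := by
  constructor
  · intro h
    refine le_antisymm (measure_le H) ?_
    rw [← (measure_full_eq (⊤ : Submodule (ZMod p) _)).2 (by simp)]
    exact h _
  · intro h K
    rw [h]; exact measure_le K

lemma inCD_classify (H : Subgroup (CDP (ZMod p))) :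
    inCD H ↔ H = cdFull ⊥ ∨ H = cdFull ⊤ ∨ ∃ t, H = cdFull (cdA t) := by
  rw [inCD_iff]
  constructor
  · intro h
    have h1 := measure_le_full H
    have h2 : CDmeasure (cdFull (cdProj H)) = p ^ 12 := le_antisymm (measure_le _) (h ▸ h1)
    have hH : H = cdFull (cdProj H) := by
      apply Subgroup.eq_of_le_of_card_ge (le_cdFull H)
      have h3 : CDmeasure (cdFull (cdProj H)) ≤ CDmeasure H := by rw [h, h2]
      rw [CDmeasure, CDmeasure, centralizer_eq H] at h3
      exact Nat.le_of_mul_le_mul_right h3 Nat.card_pos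
    rcases (measure_full_eq _).1 h2 with h | h | ⟨t, h⟩
    · rw [h] at hH; exact Or.inl hH
    · rw [h] at hH; exact Or.inr (Or.inl hH)
    · rw [h] at hH; exact Or.inr (Or.inr ⟨t, hH⟩)
  · rintro (rfl | rfl | ⟨t, rfl⟩)
    · exact (measure_full_eq _).2 (by simp)
    · exact (measure_full_eq _).2 (by simp)
    · exact (measure_full_eq _).2 (Or.inr (Or.inr ⟨t, rfl⟩))

lemma cdA_ne_bot (t : Option F) : cdA t ≠ ⊥ := by
  intro h
  have := finrank_cdA t
  rw [h, finrank_bot] at this; omega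

lemma cdA_ne_top (t : Option F) : cdA t ≠ ⊤ := by
  intro h
  have := finrank_cdA t
  rw [h, finrank_top, finM] at this; omega

lemma atom_iff (K : Subgroup (CDP (ZMod p))) :
    (inCD K ∧ Subgroup.center _ < K ∧ K < ⊤) ↔ ∃ t, K = cdFull (cdA t) := by
  rw [center_eq, ← cdFull_top, inCD_classify]
  constructor
  · rintro ⟨h | h | h, h1, h2⟩
    · exact absurd h h1.ne'
    · exact absurd h h2.ne
    · exact h
  · rintro ⟨t, rfl⟩
    refine ⟨Or.inr (Or.inr ⟨t, rfl⟩), lt_of_le_of_ne (cdFull_le.2 bot_le) ?_,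
      lt_of_le_of_ne (cdFull_le.2 le_top) ?_⟩
    · intro h; exact cdA_ne_bot t (cdFull_inj h).symm
    · intro h; exact cdA_ne_top t (cdFull_inj h)

lemma abelian_iff (t : Option F) :
    (∀ x y : cdFull (cdA t), x * y = y * x) ↔ ∃ s : F, t = some s ∧ s ^ 2 = -1 := by
  rw [← cdA_isotropic]
  constructor
  · intro h u hu v hv
    have h' : (⟨u, 0⟩ : CDP F) * ⟨v, 0⟩ = ⟨v, 0⟩ * ⟨u, 0⟩ :=
      congrArg Subtype.val (h ⟨⟨u, 0⟩, hu⟩ ⟨⟨v, 0⟩, hv⟩)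
    exact (CDP.comm_iff ⟨u, 0⟩ ⟨v, 0⟩).1 h'
  · intro h x y
    apply Subtype.ext
    exact (CDP.comm_iff x.1 y.1).2 (h _ x.2 _ y.2)

lemma abelian_count : {K : Subgroup (CDP (ZMod p)) | inCD K ∧ Subgroup.center _ < K ∧ K < ⊤ ∧
    ∀ x y : K, x * y = y * x}.ncard = {s : ZMod p | s ^ 2 = -1}.ncard := by
  rw [← Set.ncard_image_of_injective {s : ZMod p | s ^ 2 = -1}
    (f := fun s => cdFull (cdA (some s)))
    (cdFull_inj.comp (cdA_inj.comp (Option.some_injective _)))]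
  congr 1
  ext K
  constructor
  · rintro ⟨h1, h2, h3, h4⟩
    obtain ⟨t, rfl⟩ := (atom_iff K).1 ⟨h1, h2, h3⟩
    obtain ⟨s, rfl, hs⟩ := (abelian_iff t).1 h4
    exact ⟨s, hs, rfl⟩
  · rintro ⟨s, hs, rfl⟩
    obtain ⟨h1, h2, h3⟩ := (atom_iff (cdFull (cdA (some s)))).2 ⟨_, rfl⟩
    exact ⟨h1, h2, h3, (abelian_iff _).2 ⟨s, rfl, hs⟩⟩

end CDGroup

lemma zmod_two_sq : ∀ s : ZMod 2, s ^ 2 = -1 ↔ s = 1 := by decide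

/-- for every prime `p` there is a finite group `P` of order `p^9`
such that `CD(P)` is a quasi-antichain of width `p + 1` with `P ∈ CD(P)`, whose
number of abelian atoms is exactly 1 if `p = 2`, exactly 2 if `p ≡ 1 (mod 4)`,
and 0 if `p ≡ 3 (mod 4)`. -/
theorem stmt18 (p : ℕ) (hp : p.Prime) :
    ∃ (P : Type) (grp : Group P) (fin : Finite P),
      @GoodCDwidthPplus1 P grp fin p := by
  have : Fact p.Prime := ⟨hp⟩
  refine ⟨CDP (ZMod p), inferInstance, inferInstance, ?_, ?_, ?_, ?_, ?_, ?_, ?_, ?_, ?_⟩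
  · rw [Nat.card_congr CDP.equiv]
    simp only [Nat.card_prod, Nat.card_fun, Nat.card_fin, Nat.card_zmod]
    ring
  · rw [inCD_classify, cdFull_top]; simp
  · rw [inCD_classify, center_eq]; simp
  · intro K hK
    rw [inCD_classify] at hK
    rw [center_eq]
    rcases hK with rfl | rfl | ⟨t, rfl⟩ <;> exact cdFull_le.2 bot_le
  · intro K K' hK hK' h1 h2 h3
    obtain ⟨t, rfl⟩ := (atom_iff K).1 ⟨hK, h1, h2.trans_lt h3⟩
    obtain ⟨s, rfl⟩ := (atom_iff K').1 ⟨hK', h1.trans_le h2, h3⟩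
    congr 1
    exact Submodule.eq_of_le_of_finrank_le (cdFull_le.1 h2) (by rw [finrank_cdA, finrank_cdA])
  · have : {K : Subgroup (CDP (ZMod p)) | inCD K ∧ Subgroup.center _ < K ∧ K < ⊤} =
        Set.range (cdFull ∘ cdA) := by
      ext K
      rw [Set.mem_ofPred_eq, atom_iff, Set.mem_range]
      exact ⟨fun ⟨t, h⟩ => ⟨t, h.symm⟩, fun ⟨t, h⟩ => ⟨t, h.symm⟩⟩
    rw [this, ← Set.image_univ, Set.ncard_image_of_injective _ (cdFull_inj.comp cdA_inj),
      Set.ncard_univ, Finite.card_option, Nat.card_zmod]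
  · rintro rfl
    rw [abelian_count, Set.ncard_eq_one]
    refine ⟨1, ?_⟩
    ext s
    rw [Set.mem_ofPred_eq, Set.mem_singleton_iff]
    convert zmod_two_sq s
  · intro h4
    rw [abelian_count]
    obtain ⟨i, hi⟩ := ZMod.exists_sq_eq_neg_one_iff.2 (by omega : p % 4 ≠ 3)
    have hi0 : i ≠ 0 := by rintro rfl; simp at hi
    rw [Set.ncard_eq_two]
    refine ⟨i, -i, ?_, ?_⟩
    · have : Fact (2 < p) := ⟨by have := hp.two_le; rcases this.eq_or_lt with h | h <;> omega⟩
      intro h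
      have h2 : (2 : ZMod p) * i = 0 := by linear_combination h
      rcases mul_eq_zero.1 h2 with h2 | h2
      · exact Ring.two_ne_zero (by rw [ZMod.ringChar_zmod_n]; exact this.out.ne') h2
      · exact hi0 h2
    · ext s
      rw [Set.mem_ofPred_eq, hi, ← sq, sq_eq_sq_iff_eq_or_eq_neg]
      rfl
  · intro h4
    rw [abelian_count, Set.ncard_eq_zero]
    ext s
    simp only [Set.mem_ofPred_eq, Set.mem_empty_iff_false, iff_false]
    intro hs
    exact ZMod.exists_sq_eq_neg_one_iff.1 ⟨s, by rw [← hs, sq]⟩ h4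
end
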